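/- arXiv:1209.3296 — 2 statements merged into one kernel-verified Lean document; each statement's English description precedes it below -/
import Mathlib

section
/- Let μ ∈ P_c^{∨,+} := {μ ∈ P∨ : 0 ≤ ⟨μ,α⟩ ≤ c for all α ∈ R₀⁺} and let ξ_μ be the unique global minimum of 𝒱_μ. Then ξ_μ lies in the open alcove 2πA∨ := {ξ ∈ V : 0 < ⟨ξ,α⟩ < 2π for all α ∈ R₀⁺}, and the moment-gap inequalities hold: for every α ∈ R₀⁺, 2π⟨ρ∨+μ,α⟩/(c+κ₋) ≤ ⟨ξ_μ,α⟩ ≤ 2π⟨ρ∨+μ,α⟩/(c+κ₊), where κ_± := (2/n) ∑_{α∈R₀⁺} (1−t_α²)/(1 ± |t_α|)². -/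
open scoped RealInnerProductSpace BigOperators Classical

noncomputable section

/-- Alternating composition `A ∘ B ∘ A ∘ ⋯` with `m` factors (starting with `A`). -/
def altComp {α : Type*} (A B : α → α) : ℕ → (α → α)
  | 0 => id
  | m + 1 => A ∘ altComp B A m

/-- The sign of a real number, as an integer (with `sgnZ 0 = 0`). -/
def sgnZ (x : ℝ) : ℤ := if 0 < x then 1 else if x < 0 then -1 else 0

/-- The function `v(x) = (1-t²)∫₀ˣ dy/(1-2t cos y+t²)`. -/
def mvfun (t x : ℝ) : ℝ :=
  (1 - t ^ 2) * ∫ y in (0:ℝ)..x, 1 / (1 - 2 * t * Real.cos y + t ^ 2)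

section AffineOps

variable {V : Type*} [NormedAddCommGroup V] [InnerProductSpace ℝ V]

/-- The coroot `α∨ = 2α/⟨α,α⟩`. -/
def coroot (α : V) : V := (2 / ⟪α, α⟫) • α

/-- The affine root `a = α∨ + r c` (encoded as the pair `(α, r)`), as an affine
function on `V`. -/
def aval (c : ℝ) (a : V × ℤ) (x : V) : ℝ := ⟪x, coroot a.1⟫ + a.2 * c

/-- The affine reflection `s_a(x) = x - a(x) α` attached to `a = α∨ + r c`. -/
def sAff (c : ℝ) (a : V × ℤ) (x : V) : V := x - aval c a x • a.1

/-- `w` maps the affine root `a` to the affine root `b`, i.e. `(wa)(x) = a(w⁻¹x) = b(x)`. -/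
def mapsRoot (c : ℝ) (w : Equiv.Perm V) (a b : V × ℤ) : Prop :=
  ∀ x : V, aval c a (w⁻¹ x) = aval c b x

/-- The linear part `w′` of an affine transformation `w`. -/
def linPart (w : Equiv.Perm V) (x : V) : V := w x - w 0

variable {R : Type*} [Field R]

/-- The difference-reflection operator `T̂_a`. -/
def hatT (c : ℝ) (τ : V × ℤ → R) (a : V × ℤ) (f : V → R) (x : V) : R :=
  if 0 < aval c a x then τ a * f (sAff c a x)
  else if aval c a x = 0 then τ a * f x
  else (τ a)⁻¹ * f (sAff c a x) + (τ a - (τ a)⁻¹) * f x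

/-- The discrete integral operator `J_a`. -/
def Jop (c : ℝ) (a : V × ℤ) (f : V → R) (x : V) : R :=
  if 0 < aval c a x then
    - ∑ k ∈ Finset.Icc (1 : ℤ) ⌊aval c a x⌋, f (x - k • a.1)
  else if aval c a x = 0 then 0
  else ∑ k ∈ Finset.Ico (0 : ℤ) (-⌊aval c a x⌋), f (x + k • a.1)

/-- The integral-reflection operator `I_a = τ_a s_a + (τ_a - τ_a⁻¹) J_a`. -/
def Iop (c : ℝ) (τ : V × ℤ → R) (a : V × ℤ) (f : V → R) (x : V) : R :=
  τ a * f (sAff c a x) + (τ a - (τ a)⁻¹) * Jop c a f x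

end AffineOps

/-- An irreducible reduced crystallographic root system spanning `V`, together with a
choice of positive roots, simple roots, and the highest short root. -/
structure RootSystemData (V : Type*) [NormedAddCommGroup V] [InnerProductSpace ℝ V] :
    Type _ where
  n : ℕ
  n_pos : 1 ≤ n
  rank_eq : Module.finrank ℝ V = n
  R0 : Finset V
  ne_zero : ∀ α ∈ R0, α ≠ (0 : V)
  span_top : Submodule.span ℝ (R0 : Set V) = ⊤
  reduced : ∀ α ∈ R0, ∀ t : ℝ, t • α ∈ R0 → t = 1 ∨ t = -1
  crystallographic : ∀ α ∈ R0, ∀ β ∈ R0, ∃ k : ℤ, ⟪β, coroot α⟫ = (k : ℝ)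
  reflect_mem : ∀ α ∈ R0, ∀ β ∈ R0, β - ⟪β, coroot α⟫ • α ∈ R0
  irreducible : ∀ S : Finset V, S ⊆ R0 →
      (∀ a ∈ S, ∀ b ∈ R0, b ∉ S → ⟪a, b⟫ = 0) → S = ∅ ∨ S = R0
  pos : Finset V
  pos_subset : pos ⊆ R0
  pos_or_neg : ∀ α ∈ R0, α ∈ pos ∨ -α ∈ pos
  pos_not_both : ∀ α ∈ pos, -α ∉ pos
  pos_add : ∀ α ∈ pos, ∀ β ∈ pos, α + β ∈ R0 → α + β ∈ pos
  simpleRoot : Fin n → V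
  simpleRoot_mem : ∀ j, simpleRoot j ∈ pos
  pos_natCombo : ∀ α ∈ pos, ∃ k : Fin n → ℕ, α = ∑ j, (k j : ℝ) • simpleRoot j
  hshort : V
  hshort_mem : hshort ∈ pos
  hshort_short : ∀ α ∈ R0, ‖hshort‖ ≤ ‖α‖
  hshort_highest : ∀ α ∈ R0, ‖α‖ = ‖hshort‖ →
      ∃ k : Fin n → ℕ, hshort - α = ∑ j, (k j : ℝ) • simpleRoot j

namespace RootSystemData

variable {V : Type*} [NormedAddCommGroup V] [InnerProductSpace ℝ V]
variable (D : RootSystemData V)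

/-- The weight lattice `P`. -/
def weightLattice : Set V :=
  {x : V | ∀ α ∈ D.R0, ∃ k : ℤ, ⟪x, coroot α⟫ = (k : ℝ)}

/-- The root lattice `Q`. -/
def rootLattice : Set V := (Submodule.span ℤ (D.R0 : Set V) : Set V)

/-- The coweight lattice `P∨`. -/
def coweightLattice : Set V :=
  {x : V | ∀ α ∈ D.R0, ∃ k : ℤ, ⟪x, α⟫ = (k : ℝ)}

/-- The dominant cone. -/
def dominant : Set V := {x : V | ∀ α ∈ D.pos, 0 ≤ ⟪x, coroot α⟫}

/-- `ω` is a minuscule (dominant) weight. -/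
def IsMinuscule (ω : V) : Prop :=
  ω ∈ D.weightLattice ∧ ω ∈ D.dominant ∧ ω ≠ 0 ∧
    ∀ α ∈ D.pos, ⟪ω, coroot α⟫ ≤ 1

/-- `ω` is the quasi-minuscule weight, i.e. the highest short root. -/
def IsQuasiMinuscule (ω : V) : Prop := ω = D.hshort

/-- The saturated set `P_ϑ` containing the (quasi-)minuscule weights. -/
def Ptheta : Set V :=
  {ν : V | ν ∈ D.weightLattice ∧ ∀ α ∈ D.R0, α ≠ ν → |⟪ν, coroot α⟫| ≤ 1}

/-- Half sum of the positive roots. -/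
def rhoHalf : V := (2⁻¹ : ℝ) • ∑ α ∈ D.pos, α

/-- Half sum of the positive coroots. -/
def rhoVee : V := (2⁻¹ : ℝ) • ∑ α ∈ D.pos, coroot α

/-- `(α, r)` encodes an affine root. -/
def IsAffRoot (a : V × ℤ) : Prop := a.1 ∈ D.R0

/-- `(α, r)` encodes a positive affine root. -/
def IsAffPos (a : V × ℤ) : Prop :=
  a.1 ∈ D.R0 ∧ (1 ≤ a.2 ∨ (a.2 = 0 ∧ a.1 ∈ D.pos))

/-- `(α, r)` encodes a negative affine root. -/
def IsAffNeg (a : V × ℤ) : Prop := D.IsAffPos (-a.1, -a.2)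

/-- The simple affine roots `a₀ = -ϑ∨ + c`, `a_j = α_j∨`. -/
def aSimple (j : Fin (D.n + 1)) : V × ℤ :=
  Fin.cons (α := fun _ => V × ℤ) (-D.hshort, (1 : ℤ))
    (fun i => (D.simpleRoot i, (0 : ℤ))) j

/-- The reflections generating the finite Weyl group `W₀`. -/
def W0Gens : Set (Equiv.Perm V) :=
  {e | ∃ α ∈ D.R0, ∀ x, e x = x - ⟪x, coroot α⟫ • α}

/-- The finite Weyl group `W₀`. -/
def W0 : Subgroup (Equiv.Perm V) := Subgroup.closure D.W0Gens

variable (c : ℝ)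

/-- The affine reflections generating the affine Weyl group `W_R`. -/
def AffGens : Set (Equiv.Perm V) :=
  {e | ∃ a : V × ℤ, D.IsAffRoot a ∧ ∀ x, e x = sAff c a x}

/-- The affine Weyl group `W_R`. -/
def WR : Subgroup (Equiv.Perm V) := Subgroup.closure (D.AffGens c)

/-- The translations `t_{cλ}`, `λ ∈ P`. -/
def TransGens : Set (Equiv.Perm V) :=
  {e | ∃ lam ∈ D.weightLattice, ∀ x : V, e x = x + c • lam}

/-- The extended affine Weyl group `W = W₀ ⋉ t(cP)`. -/
def Wext : Subgroup (Equiv.Perm V) :=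
  Subgroup.closure (D.AffGens c ∪ D.TransGens c)

/-- The set `R(w) = R⁺ ∩ w⁻¹(R⁻)`. -/
def RW (w : Equiv.Perm V) : Set (V × ℤ) :=
  {a | D.IsAffPos a ∧ ∃ b : V × ℤ, D.IsAffNeg b ∧ mapsRoot c w a b}

/-- The length `ℓ(w) = #R(w)`. -/
def len (w : Equiv.Perm V) : ℕ := (D.RW c w).ncard

/-- The closed fundamental alcove `A_c`. -/
def alcove : Set V := {x | ∀ a : V × ℤ, D.IsAffPos a → 0 ≤ aval c a x}

/-- `wmin x` is the unique shortest element of the affine Weyl group mapping `x` into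
the fundamental alcove. -/
def IsWmin (wmin : V → Equiv.Perm V) : Prop :=
  ∀ x : V, wmin x ∈ D.WR c ∧ (wmin x) x ∈ D.alcove c ∧
    ∀ w ∈ D.WR c, w x ∈ D.alcove c → D.len c (wmin x) < D.len c w ∨ w = wmin x

/-- One step in the Bruhat order: `w < w s_a` whenever `ℓ(w) < ℓ(w s_a)`. -/
def bruhatStep (w w' : Equiv.Perm V) : Prop :=
  ∃ a : V × ℤ, D.IsAffPos a ∧ ∃ e : Equiv.Perm V,
    (∀ x, e x = sAff c a x) ∧ w' = w * e ∧ D.len c w < D.len c w'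

/-- The Bruhat order on the affine Weyl group. -/
def bruhatLE (w w' : Equiv.Perm V) : Prop :=
  Relation.ReflTransGen (D.bruhatStep c) w w'

/-- The partial order on `V`: `x ≤ y` iff `x₊ = y₊` and `w_x ≤ w_y` (Bruhat). -/
def vle (wmin : V → Equiv.Perm V) (x y : V) : Prop :=
  (wmin x) x = (wmin y) y ∧ D.bruhatLE c (wmin x) (wmin y)

/-- The interval `[x, y]` for the order `vle`. -/
def vInterval (wmin : V → Equiv.Perm V) (x y : V) : Set V :=
  {z : V | D.vle c wmin x z ∧ D.vle c wmin z y}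

/-- The partial order `⪯` on the weight lattice:
`μ ⪯ λ` iff `λ - μ ∈ Q` and `Conv [μ₊, μ] ⊆ Conv [λ₊, λ]`. -/
def pleq (wmin : V → Equiv.Perm V) (μ lam : V) : Prop :=
  lam - μ ∈ D.rootLattice ∧
    convexHull ℝ (D.vInterval c wmin ((wmin μ) μ) μ)
      ⊆ convexHull ℝ (D.vInterval c wmin ((wmin lam) lam) lam)

section Ops

variable {R : Type*} [Field R]

/-- `τ` is a multiplicity function: nonvanishing on affine roots, and invariant
under the (extended affine) Weyl group action on the affine roots. -/
def IsMultiplicity (τ : V × ℤ → R) : Prop :=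
  (∀ a : V × ℤ, D.IsAffRoot a → τ a ≠ 0) ∧
    ∀ w ∈ D.Wext c, ∀ a b : V × ℤ, D.IsAffRoot a → D.IsAffRoot b →
      mapsRoot c w a b → τ a = τ b

/-- `τ_w = ∏_{a ∈ R(w)} τ_a`. -/
def tauw (τ : V × ℤ → R) (w : Equiv.Perm V) : R := ∏ᶠ a ∈ D.RW c w, τ a

/-- `τ₀`, the multiplicity of the affine simple root `a₀`. -/
def tauZero (τ : V × ℤ → R) : R := τ (-D.hshort, (1 : ℤ))

/-- The operator `I_{j₁} ∘ ⋯ ∘ I_{jℓ}` attached to a word in the simple reflections. -/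
def wordOp (τ : V × ℤ → R) (l : List (Fin (D.n + 1))) : (V → R) → V → R :=
  (l.map fun j => Iop c τ (D.aSimple j)).foldr (· ∘ ·) id

/-- `l` is a reduced word for `w`, i.e. `w = s_{j₁} ∘ ⋯ ∘ s_{jℓ}` with `ℓ = ℓ(w)`. -/
def IsReducedWord (w : Equiv.Perm V) (l : List (Fin (D.n + 1))) : Prop :=
  l.length = D.len c w ∧
    ∀ x : V, w x = ((l.map fun j => sAff c (D.aSimple j)).foldr (· ∘ ·) id) x

/-- `e∨_τ(η) = ∏_{α ∈ R₀⁺} τ_{α∨}^{⟨η,α∨⟩}`. -/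
def etau (τ : V × ℤ → R) (η : V) : R :=
  ∏ α ∈ D.pos, τ (α, (0 : ℤ)) ^ ⌊⟪η, coroot α⟫⌋

/-- `h∨_τ = τ₀² e∨_τ(ϑ)`. -/
def hvee (τ : V × ℤ → R) : R := D.tauZero τ ^ 2 * D.etau τ D.hshort

/-- `θ(μ) = #{b ∈ R(w_μ) : b(μ) = -2}`. -/
def theta (wmin : V → Equiv.Perm V) (μ : V) : ℕ :=
  {b : V × ℤ | b ∈ D.RW c (wmin μ) ∧ aval c b μ = -2}.ncard

/-- The coefficient `c_{λ,η} = θ(λ-η) e∨_τ(η) (h∨_τ)^{-sign⟨λ,η∨⟩}`. -/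
def ccoef (τ : V × ℤ → R) (wmin : V → Equiv.Perm V) (lam η : V) : R :=
  (D.theta c wmin (lam - η) : R) * D.etau τ η *
    D.hvee τ ^ (-sgnZ ⟪lam, coroot η⟫)

/-- The coefficient `a_{λ,ν} = τ_{w_{w_λ(λ-ν)}} τ_{w_{w_λ(λ-ν)} w_λ} τ_{w_λ}⁻¹`. -/
def acoef (τ : V × ℤ → R) (wmin : V → Equiv.Perm V) (lam ν : V) : R :=
  D.tauw c τ (wmin ((wmin lam) (lam - ν))) *
    D.tauw c τ (wmin ((wmin lam) (lam - ν)) * wmin lam) *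
    (D.tauw c τ (wmin lam))⁻¹

/-- The coefficient `b_{λ,ν}`. -/
def bcoef (τ : V × ℤ → R) (wmin : V → Equiv.Perm V) (lam ν : V) : R :=
  if (wmin (lam - ν)) (lam - ν) = (wmin lam) lam then
    D.tauw c τ (wmin ((wmin lam) (lam - ν))) ^ 2 *
      (if D.IsAffNeg (ν, ⌊(1 - ⟪lam, coroot ν⟫) / c⌋) then 1 else 0)
  else D.ccoef c τ wmin ((wmin lam) lam) (linPart (wmin lam) ν)

/-- The intertwining operator `(𝒥f)(λ) = τ_{w_λ}⁻¹ (I_{w_λ} f)(λ₊)`, where `Iw` assigns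
to each `w_λ` the composite of integral-reflection operators along a reduced word. -/
def Jcal (τ : V × ℤ → R) (wmin : V → Equiv.Perm V)
    (Iw : Equiv.Perm V → (V → R) → V → R) (f : V → R) (x : V) : R :=
  (D.tauw c τ (wmin x))⁻¹ * Iw (wmin x) f ((wmin x) x)

end Ops

/-- The Yang–Yang type Morse function `𝒱_μ`. -/
def morse (t : V → ℝ) (μ ξ : V) : ℝ :=
  (c / 2) * ⟪ξ, ξ⟫ - 2 * Real.pi * ⟪D.rhoVee + μ, ξ⟫ +
    ∑ α ∈ D.pos, (2 / ⟪α, α⟫) * ∫ x in (0:ℝ)..(⟪ξ, α⟫), mvfun (t α) x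

/-- The critical equation `cξ + ∑_{α>0} v_α(⟨ξ,α⟩) α∨ = 2π(ρ∨+μ)`. -/
def criticalEq (t : V → ℝ) (μ ξ : V) : Prop :=
  c • ξ + ∑ α ∈ D.pos, mvfun (t α) ⟪ξ, α⟫ • coroot α
    = (2 * Real.pi) • (D.rhoVee + μ)

/-- The Hessian bilinear form `H_{η,ζ}(ξ)`. -/
def hessForm (t : V → ℝ) (ξ η ζ : V) : ℝ :=
  c * ⟪η, ζ⟫ + ∑ α ∈ D.R0,
    (1 - t α ^ 2) * ⟪η, α⟫ * ⟪ζ, α⟫ /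
      (⟪α, α⟫ * (1 - 2 * t α * Real.cos ⟪ξ, α⟫ + t α ^ 2))

/-- `κ_± = (2/n) ∑_{α>0} (1-t_α²)/(1 ± |t_α|)²`; here `s = ±1`. -/
def kappaPM (t : V → ℝ) (s : ℝ) : ℝ :=
  (2 / (D.n : ℝ)) * ∑ α ∈ D.pos, (1 - t α ^ 2) / (1 + s * |t α|) ^ 2

end RootSystemData

/-- Closed form of `mvfun`. -/
def vcl (t x : ℝ) : ℝ := x + 2 * Real.arctan (t * Real.sin x / (1 - t * Real.cos x))

lemma aux_den1 {t : ℝ} (ht : t ∈ Set.Ioo (-1 : ℝ) 1) (x : ℝ) : 0 < 1 - t * Real.cos x := by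
  have h1 := Real.neg_one_le_cos x
  have h2 := Real.cos_le_one x
  obtain ⟨h3, h4⟩ := ht
  rcases le_total 0 t with h | h <;> nlinarith

lemma aux_den2 {t : ℝ} (ht : t ∈ Set.Ioo (-1 : ℝ) 1) (x : ℝ) :
    0 < 1 - 2 * t * Real.cos x + t ^ 2 := by
  have h1 := aux_den1 ht x
  have h2 := Real.sin_sq_add_cos_sq x
  nlinarith [sq_nonneg (t * Real.sin x), mul_pos h1 h1]

lemma vcl_hasDerivAt {t : ℝ} (ht : t ∈ Set.Ioo (-1 : ℝ) 1) (x : ℝ) :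
    HasDerivAt (vcl t) ((1 - t ^ 2) * (1 / (1 - 2 * t * Real.cos x + t ^ 2))) x := by
  have h1 := aux_den1 ht x
  have h2 := aux_den2 ht x
  have hs := Real.sin_sq_add_cos_sq x
  have hnum : HasDerivAt (fun x => t * Real.sin x) (t * Real.cos x) x :=
    (Real.hasDerivAt_sin x).const_mul t
  have hden : HasDerivAt (fun x => 1 - t * Real.cos x) (-(t * (-Real.sin x))) x :=
    ((Real.hasDerivAt_cos x).const_mul t).const_sub 1
  have hq := ((hnum.fun_div hden h1.ne').arctan.const_mul 2)
  have := (hasDerivAt_id x).add hq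
  refine this.congr_deriv ?_
  have h3 : 1 + (t * Real.sin x / (1 - t * Real.cos x)) ^ 2
      = (1 - 2 * t * Real.cos x + t ^ 2) / (1 - t * Real.cos x) ^ 2 := by
    field_simp
    linear_combination (t ^ 2) * hs
  rw [h3]
  field_simp
  linear_combination (-2 * t ^ 2) * hs

lemma mvfun_eq {t : ℝ} (ht : t ∈ Set.Ioo (-1 : ℝ) 1) : mvfun t = vcl t := by
  funext x
  unfold mvfun
  rw [← intervalIntegral.integral_const_mul,
    intervalIntegral.integral_eq_sub_of_hasDerivAt (f := vcl t)]
  · simp [vcl]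
  · intro y _
    exact vcl_hasDerivAt ht y
  · apply Continuous.intervalIntegrable
    apply Continuous.mul continuous_const
    apply Continuous.div continuous_const (by fun_prop)
    intro y
    exact (aux_den2 ht y).ne'

lemma vcl_continuous {t : ℝ} (ht : t ∈ Set.Ioo (-1 : ℝ) 1) : Continuous (vcl t) :=
  continuous_iff_continuousAt.2 fun x => (vcl_hasDerivAt ht x).continuousAt

lemma vcl_neg (t x : ℝ) : vcl t (-x) = - vcl t x := by
  simp only [vcl, Real.sin_neg, Real.cos_neg, mul_neg, neg_div, Real.arctan_neg]
  ring

lemma vcl_add (t x : ℝ) : vcl t (x - 2 * Real.pi) = vcl t x - 2 * Real.pi := by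
  simp only [vcl, Real.sin_sub_two_pi, Real.cos_sub_two_pi]
  ring

lemma vcl_slope {t : ℝ} (ht : t ∈ Set.Ioo (-1 : ℝ) 1) (x y : ℝ) :
    ∃ q : ℝ, (1 - t ^ 2) / (1 + 1 * |t|) ^ 2 ≤ q ∧ q ≤ (1 - t ^ 2) / (1 + (-1) * |t|) ^ 2 ∧
      vcl t x - vcl t y = q * (x - y) := by
  have key : ∀ z : ℝ, (1 - t ^ 2) / (1 + 1 * |t|) ^ 2 ≤
      (1 - t ^ 2) * (1 / (1 - 2 * t * Real.cos z + t ^ 2)) ∧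
      (1 - t ^ 2) * (1 / (1 - 2 * t * Real.cos z + t ^ 2)) ≤
        (1 - t ^ 2) / (1 + (-1) * |t|) ^ 2 := by
    intro z
    have h2 := aux_den2 ht z
    have habs : |t| < 1 := abs_lt.2 ht
    have h0 := abs_nonneg t
    have hsq := sq_abs t
    have hpos : 0 ≤ 1 - t ^ 2 := by nlinarith
    have hb : |t * Real.cos z| ≤ |t| := by
      rw [abs_mul]
      nlinarith [Real.abs_cos_le_one z]
    have hb2 := abs_le.1 hb
    rw [mul_one_div]
    constructor
    · apply div_le_div_of_nonneg_left hpos h2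
      nlinarith
    · apply div_le_div_of_nonneg_left hpos
      · have : 0 < 1 + (-1) * |t| := by linarith
        positivity
      · nlinarith
  have hlt : ∀ a b : ℝ, a < b → ∃ q : ℝ, (1 - t ^ 2) / (1 + 1 * |t|) ^ 2 ≤ q ∧
      q ≤ (1 - t ^ 2) / (1 + (-1) * |t|) ^ 2 ∧ vcl t b - vcl t a = q * (b - a) := by
    intro a b hab
    obtain ⟨z, _, hz⟩ := exists_hasDerivAt_eq_slope (vcl t) _ hab
      (vcl_continuous ht).continuousOn (fun z _ => vcl_hasDerivAt ht z)
    refine ⟨_, (key z).1, (key z).2, ?_⟩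
    rw [hz]
    have : b - a ≠ 0 := by linarith
    field_simp
  rcases lt_trichotomy x y with h | h | h
  · obtain ⟨q, h1, h2, h3⟩ := hlt x y h
    exact ⟨q, h1, h2, by linarith⟩
  · subst h
    exact ⟨_, (key x).1, (key x).2, by ring⟩
  · exact hlt y x h

lemma vcl_mono {t : ℝ} (ht : t ∈ Set.Ioo (-1 : ℝ) 1) {x y : ℝ} (h : x ≤ y) :
    vcl t x ≤ vcl t y := by
  obtain ⟨q, h1, _, h3⟩ := vcl_slope ht y x
  have habs : |t| < 1 := abs_lt.2 ht
  have hpos : 0 ≤ (1 - t ^ 2) / (1 + 1 * |t|) ^ 2 := by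
    apply div_nonneg _ (sq_nonneg _)
    nlinarith [sq_abs t, abs_nonneg t]
  nlinarith [mul_nonneg (hpos.trans h1) (sub_nonneg.2 h)]

namespace RootSystemData

variable {V : Type*} [NormedAddCommGroup V] [InnerProductSpace ℝ V]
variable (D : RootSystemData V)

lemma inner_coroot (x α : V) : ⟪x, coroot α⟫ = 2 * ⟪x, α⟫ / ⟪α, α⟫ := by
  simp only [coroot, inner_smul_right]
  ring

/-- The reflection. -/
def reflx (β x : V) : V := x - ⟪x, coroot β⟫ • β

lemma rpos {D : RootSystemData V} {α : V} (h : α ∈ D.R0) : 0 < ⟪α, α⟫ := by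
  rw [real_inner_self_eq_norm_sq]
  have := norm_pos_iff.2 (D.ne_zero α h)
  positivity

lemma inner_reflx (β x y : V) :
    ⟪reflx β x, y⟫ = ⟪x, y⟫ - 2 * ⟪x, β⟫ / ⟪β, β⟫ * ⟪β, y⟫ := by
  rw [reflx, inner_sub_left, inner_smul_left, inner_coroot]
  simp

lemma reflx_inner_left {β : V} (hβ : 0 < ⟪β, β⟫) (x : V) : ⟪reflx β x, β⟫ = - ⟪x, β⟫ := by
  rw [inner_reflx]
  field_simp
  ring

lemma reflx_symm (β x y : V) : ⟪reflx β x, y⟫ = ⟪x, reflx β y⟫ := by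
  rw [inner_reflx, real_inner_comm (reflx β y) x, inner_reflx β y x]
  rw [real_inner_comm y β, real_inner_comm x β, real_inner_comm x y]
  ring

lemma reflx_reflx {β : V} (hβ : 0 < ⟪β, β⟫) (x : V) : reflx β (reflx β x) = x := by
  have h := reflx_inner_left hβ x
  rw [reflx, inner_coroot, h]
  rw [reflx, inner_coroot, sub_sub, ← add_smul]
  rw [show 2 * ⟪x, β⟫ / ⟪β, β⟫ + 2 * -⟪x, β⟫ / ⟪β, β⟫ = 0 by ring]
  simp

lemma reflx_norm {β : V} (hβ : 0 < ⟪β, β⟫) (x : V) : ⟪reflx β x, reflx β x⟫ = ⟪x, x⟫ := by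
  rw [reflx_symm, reflx_reflx hβ]

lemma reflx_self {β : V} (hβ : 0 < ⟪β, β⟫) : reflx β β = -β := by
  rw [reflx, inner_coroot, mul_div_assoc, div_self hβ.ne', mul_one, two_smul]
  abel

lemma neg_mem {α : V} (h : α ∈ D.R0) : -α ∈ D.R0 := by
  have := D.reflect_mem α h α h
  rwa [← reflx, reflx_self (rpos h)] at this

lemma reflx_mem {α β : V} (hα : α ∈ D.R0) (hβ : β ∈ D.R0) : reflx β α ∈ D.R0 :=
  D.reflect_mem β hβ α hα

lemma t_reflx {t : V → ℝ}
    (htinv : ∀ α ∈ D.R0, ∀ β ∈ D.R0, (∃ w ∈ D.W0, w α = β) → t α = t β)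
    {α β : V} (hα : α ∈ D.R0) (hβ : β ∈ D.R0) : t (reflx β α) = t α := by
  symm
  apply htinv α hα _ (D.reflx_mem hα hβ)
  refine ⟨⟨reflx β, reflx β, reflx_reflx (rpos hβ), reflx_reflx (rpos hβ)⟩, ?_, rfl⟩
  apply Subgroup.subset_closure
  exact ⟨β, hβ, fun x => rfl⟩

lemma t_neg {t : V → ℝ}
    (htinv : ∀ α ∈ D.R0, ∀ β ∈ D.R0, (∃ w ∈ D.W0, w α = β) → t α = t β)
    {α : V} (hα : α ∈ D.R0) : t (-α) = t α := by
  rw [← reflx_self (rpos hα)]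
  exact D.t_reflx htinv hα hα

lemma sum_reflx {β : V} (hβ : β ∈ D.R0) (F : V → ℝ) :
    ∑ α ∈ D.R0, F (reflx β α) = ∑ α ∈ D.R0, F α := by
  apply Finset.sum_nbij' (reflx β) (reflx β)
  · intro a ha; exact D.reflx_mem ha hβ
  · intro a ha; exact D.reflx_mem ha hβ
  · intro a _; exact reflx_reflx (rpos hβ) a
  · intro a _; exact reflx_reflx (rpos hβ) a
  · intro a _; rfl

lemma sum_pos_even (G : V → ℝ) (hG : ∀ α ∈ D.R0, G (-α) = G α) :
    ∑ α ∈ D.R0, G α = 2 * ∑ α ∈ D.pos, G α := by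
  have h1 : D.R0 = D.pos ∪ D.pos.image (fun x => -x) := by
    ext α
    simp only [Finset.mem_union, Finset.mem_image]
    constructor
    · intro h
      rcases D.pos_or_neg α h with h | h
      · exact Or.inl h
      · exact Or.inr ⟨_, h, neg_neg α⟩
    · rintro (h | ⟨a, h, rfl⟩)
      · exact D.pos_subset h
      · exact D.neg_mem (D.pos_subset h)
  have hd : Disjoint D.pos (D.pos.image (fun x => -x)) := by
    rw [Finset.disjoint_left]
    intro a ha hb
    obtain ⟨b, hb2, rfl⟩ := Finset.mem_image.1 hb
    exact D.pos_not_both b hb2 ha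
  have h2 : ∑ α ∈ D.R0, G α = ∑ α ∈ D.pos, G α + ∑ α ∈ D.pos.image (fun x => -x), G α := by
    rw [← Finset.sum_union hd]
    exact Finset.sum_congr h1 fun _ _ => rfl
  rw [h2, Finset.sum_image (fun a _ b _ h => neg_injective h),
    Finset.sum_congr rfl fun a ha => hG a (D.pos_subset ha)]
  ring

/-- Symmetrization. -/
lemma symmetrize {β : V} (hβ : β ∈ D.R0) (F : V → ℝ) (hF : ∀ α ∈ D.R0, F (-α) = - F α) :
    ∑ α ∈ D.pos, 2 / ⟪α, α⟫ * F α * ⟪α, β⟫ =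
      ∑ α ∈ D.R0, 1 / (2 * ⟪α, α⟫) * (F α - F (reflx β α)) * ⟪α, β⟫ := by
  have h1 := D.sum_pos_even (fun α => 2 / ⟪α, α⟫ * F α * ⟪α, β⟫) (by
    intro α hα
    simp only [hF α hα, inner_neg_left, inner_neg_right, neg_neg]
    ring)
  have h2 := D.sum_reflx hβ (fun α => 2 / ⟪α, α⟫ * F α * ⟪α, β⟫)
  have h3 : ∑ α ∈ D.R0, 1 / (2 * ⟪α, α⟫) * (F α - F (reflx β α)) * ⟪α, β⟫ =
      1 / 4 * (∑ α ∈ D.R0, 2 / ⟪α, α⟫ * F α * ⟪α, β⟫) + 1 / 4 *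
      ∑ α ∈ D.R0, 2 / ⟪reflx β α, reflx β α⟫ * F (reflx β α) * ⟪reflx β α, β⟫ := by
    rw [Finset.mul_sum, Finset.mul_sum, ← Finset.sum_add_distrib]
    apply Finset.sum_congr rfl
    intro α hα
    rw [reflx_norm (rpos hβ), reflx_inner_left (rpos hβ)]
    have := (rpos hα).ne'
    field_simp
    ring
  rw [h3, h2, h1]
  ring

lemma finDim (D : RootSystemData V) : FiniteDimensional ℝ V :=
  Module.finite_of_finrank_pos (by rw [D.rank_eq]; exact D.n_pos)

/-- Schur-type identity. -/
lemma schur (k : V → ℝ) (hk : ∀ α ∈ D.R0, ∀ β ∈ D.R0, k (reflx β α) = k α)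
    {β : V} (hβ : β ∈ D.R0) :
    ∑ α ∈ D.R0, k α * ⟪α, β⟫ ^ 2 / ⟪α, α⟫ = (∑ α ∈ D.R0, k α) / D.n * ⟪β, β⟫ := by
  have := D.finDim
  let A : V →ₗ[ℝ] V := ∑ α ∈ D.R0, (k α / ⟪α, α⟫) • (innerₗ V α).smulRight α
  have hA : ∀ x y, ⟪A x, y⟫ = ∑ α ∈ D.R0, k α / ⟪α, α⟫ * ⟪α, x⟫ * ⟪α, y⟫ := by
    intro x y
    simp only [A, LinearMap.sum_apply, sum_inner]
    apply Finset.sum_congr rfl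
    intro α _
    simp [inner_smul_left]
    ring
  have hsymm : ∀ x y, ⟪A x, y⟫ = ⟪A y, x⟫ := by
    intro x y
    rw [hA, hA]
    exact Finset.sum_congr rfl fun α _ => by ring
  have hcomm : ∀ γ ∈ D.R0, ∀ x y, ⟪A (reflx γ x), y⟫ = ⟪A x, reflx γ y⟫ := by
    intro γ hγ x y
    rw [hA, hA, ← D.sum_reflx hγ]
    apply Finset.sum_congr rfl
    intro α hα
    rw [hk α hα γ hγ, reflx_norm (rpos hγ), reflx_symm, reflx_symm, reflx_reflx (rpos hγ)]
  have heig : ∀ γ ∈ D.R0, A γ = (⟪A γ, γ⟫ / ⟪γ, γ⟫) • γ := by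
    intro γ hγ
    apply ext_inner_right ℝ
    intro y
    have h := hcomm γ hγ γ y
    rw [reflx_self (rpos hγ), map_neg, inner_neg_left, ← reflx_symm, inner_reflx] at h
    rw [inner_smul_left]
    simp only [conj_trivial]
    have h5 : 2 * ⟪A γ, γ⟫ / ⟪γ, γ⟫ * ⟪γ, y⟫ = 2 * (⟪A γ, γ⟫ / ⟪γ, γ⟫ * ⟪γ, y⟫) := by ring
    linarith
  set lam := ⟪A β, β⟫ / ⟪β, β⟫ with hlam
  have hall : ∀ γ ∈ D.R0, A γ = lam • γ := by
    have hS := D.irreducible (D.R0.filter fun γ => A γ = lam • γ) (Finset.filter_subset _ _) (by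
      intro a ha b hb hnb
      rw [Finset.mem_filter] at ha hnb
      by_contra hne
      apply hnb
      refine ⟨hb, ?_⟩
      rw [heig b hb]
      congr 1
      have h := hsymm a b
      rw [ha.2, heig b hb, inner_smul_left, inner_smul_left, real_inner_comm a b] at h
      simp only [conj_trivial] at h
      exact (mul_right_cancel₀ hne h).symm)
    rcases hS with hS | hS
    · exfalso
      have : β ∈ D.R0.filter fun γ => A γ = lam • γ := Finset.mem_filter.2 ⟨hβ, heig β hβ⟩
      rw [hS] at this
      simp at this
    · intro γ hγ
      rw [← hS] at hγ
      exact (Finset.mem_filter.1 hγ).2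
  have hAll : ∀ x, A x = lam • x := by
    intro x
    have hx : x ∈ Submodule.span ℝ (D.R0 : Set V) := by rw [D.span_top]; trivial
    have : A = lam • LinearMap.id := by
      apply LinearMap.ext_on (s := (D.R0 : Set V)) D.span_top
      intro γ hγ
      simpa using hall γ hγ
    rw [this]
    simp
  let e := stdOrthonormalBasis ℝ V
  have htr1 : ∑ i, ⟪A (e i), e i⟫ = lam * D.n := by
    simp only [hAll, inner_smul_left, real_inner_self_eq_norm_sq, e.norm_eq_one]
    simp [D.rank_eq]
    ring
  have htr2 : ∑ i, ⟪A (e i), e i⟫ = ∑ α ∈ D.R0, k α := by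
    simp only [hA]
    rw [Finset.sum_comm]
    apply Finset.sum_congr rfl
    intro α hα
    have h1 : ∑ i, ⟪α, e i⟫ ^ 2 = ⟪α, α⟫ := by
      have := e.sum_inner_mul_inner α α
      rw [← this]
      apply Finset.sum_congr rfl
      intro i _
      rw [real_inner_comm α (e i)]
      ring
    have h0 := (rpos hα).ne'
    calc ∑ i, k α / ⟪α, α⟫ * ⟪α, e i⟫ * ⟪α, e i⟫ = k α / ⟪α, α⟫ * ∑ i, ⟪α, e i⟫ ^ 2 := by
          rw [Finset.mul_sum]
          exact Finset.sum_congr rfl fun i _ => by ring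
      _ = k α := by rw [h1]; field_simp
  have hn : (D.n : ℝ) ≠ 0 := by
    have := D.n_pos
    positivity
  have hl : (∑ α ∈ D.R0, k α) / D.n = lam := by
    rw [← htr2, htr1]
    field_simp
  rw [hl]
  have h := hA β β
  rw [hAll, inner_smul_left] at h
  simp only [conj_trivial] at h
  rw [h]
  exact Finset.sum_congr rfl fun α _ => by ring

lemma kappa_eq {t : V → ℝ}
    (htinv : ∀ α ∈ D.R0, ∀ β ∈ D.R0, (∃ w ∈ D.W0, w α = β) → t α = t β)
    (s : ℝ) {β : V} (hβ : β ∈ D.R0) :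
    ∑ α ∈ D.R0, ((1 - t α ^ 2) / (1 + s * |t α|) ^ 2) * ⟪α, β⟫ ^ 2 / ⟪α, α⟫
      = D.kappaPM t s * ⟪β, β⟫ := by
  rw [D.schur (fun α => (1 - t α ^ 2) / (1 + s * |t α|) ^ 2) _ hβ, D.sum_pos_even, kappaPM]
  · ring
  · intro α hα
    simp only [D.t_neg htinv hα]
  · intro α hα γ hγ
    simp only [D.t_reflx htinv hα hγ]

/-- A height functional. -/
lemma exists_height : ∃ h : V →ₗ[ℝ] ℝ, ∀ α ∈ D.pos, 0 < h α := by
  have := D.finDim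
  have hspan : ⊤ ≤ Submodule.span ℝ (Set.range D.simpleRoot) := by
    rw [← D.span_top, Submodule.span_le]
    have hp : ∀ α ∈ D.pos, α ∈ Submodule.span ℝ (Set.range D.simpleRoot) := by
      intro α hα
      obtain ⟨k, rfl⟩ := D.pos_natCombo α hα
      exact Submodule.sum_mem _ fun j _ =>
        Submodule.smul_mem _ _ (Submodule.subset_span ⟨j, rfl⟩)
    intro α hα
    rcases D.pos_or_neg α hα with h | h
    · exact hp α h
    · have := Submodule.neg_mem _ (hp _ h)
      rwa [neg_neg] at this
  have hli : LinearIndependent ℝ D.simpleRoot :=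
    linearIndependent_of_top_le_span_of_card_eq_finrank hspan (by simp [D.rank_eq])
  let b := Module.Basis.mk hli hspan
  refine ⟨b.constr ℝ (fun _ => (1 : ℝ)), ?_⟩
  intro α hα
  obtain ⟨k, hk⟩ := D.pos_natCombo α hα
  have hb : ∀ j, b.constr ℝ (fun _ => (1 : ℝ)) (D.simpleRoot j) = 1 := by
    intro j
    have : D.simpleRoot j = b j := by simp [b]
    rw [this, Module.Basis.constr_basis]
  have hval : b.constr ℝ (fun _ => (1 : ℝ)) α = ∑ j, (k j : ℝ) := by
    rw [hk, map_sum]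
    apply Finset.sum_congr rfl
    intro j _
    rw [map_smul, hb]
    simp
  rw [hval]
  refine lt_of_le_of_ne (Finset.sum_nonneg fun j _ => by positivity) ?_
  intro h0
  have h1 := (Finset.sum_eq_zero_iff_of_nonneg (fun j _ => by positivity)).1 h0.symm
  apply D.ne_zero α (D.pos_subset hα)
  rw [hk]
  apply Finset.sum_eq_zero
  intro j hj
  rw [h1 j hj, zero_smul]

lemma rho_inner (β : V) : ⟪D.rhoVee, β⟫ = ∑ α ∈ D.pos, ⟪α, β⟫ / ⟪α, α⟫ := by
  simp only [rhoVee, inner_smul_left, sum_inner, coroot, Finset.mul_sum]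
  apply Finset.sum_congr rfl
  intro α _
  simp
  ring

lemma rho_pos {β : V} (hβ : β ∈ D.pos) : 0 < ⟪D.rhoVee, β⟫ := by
  obtain ⟨h, hh⟩ := D.exists_height
  have hneg : ∀ α ∈ D.R0, h α < 0 → α ∉ D.pos := fun α _ h1 h2 => by
    have := hh α h2
    linarith
  have hne : ∀ α ∈ D.R0, h α ≠ 0 := by
    intro α hα
    rcases D.pos_or_neg α hα with h1 | h1
    · exact (hh _ h1).ne'
    · have := hh _ h1
      rw [map_neg] at this
      linarith
  have hβR := D.pos_subset hβ
  have hs := D.symmetrize hβR (fun α => (1 / 2) * SignType.sign (h α)) (by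
    intro α _
    simp [map_neg, Left.sign_neg])
  have h1 : ⟪D.rhoVee, β⟫ =
      ∑ α ∈ D.pos, 2 / ⟪α, α⟫ * ((1 / 2) * (SignType.sign (h α) : ℝ)) * ⟪α, β⟫ := by
    rw [D.rho_inner]
    apply Finset.sum_congr rfl
    intro α hα
    rw [sign_pos (hh α hα)]
    simp
    ring
  rw [h1, hs]
  have hmono : ∀ x y : ℝ, x ≤ y → ((SignType.sign x : SignType) : ℝ) ≤ SignType.sign y := by
    intro x y hxy
    rcases lt_trichotomy x 0 with hx | hx | hx <;> rcases lt_trichotomy y 0 with hy | hy | hy <;>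
      simp [hx, hy, sign_pos, sign_neg] <;> linarith
  have hrf : ∀ α, h (reflx β α) = h α - 2 * ⟪α, β⟫ / ⟪β, β⟫ * h β := by
    intro α
    rw [reflx, map_sub, map_smul, inner_coroot, smul_eq_mul]
  have hb := hh β hβ
  apply Finset.sum_pos'
  · intro α hα
    have ha := rpos hα
    have hbb := rpos hβR
    rw [mul_assoc]
    apply mul_nonneg (by positivity)
    rcases le_total 0 ⟪α, β⟫ with hp | hp
    · apply mul_nonneg _ hp
      have : h (reflx β α) ≤ h α := by
        rw [hrf]
        have : 0 ≤ 2 * ⟪α, β⟫ / ⟪β, β⟫ * h β := by positivity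
        linarith
      have := hmono _ _ this
      linarith
    · apply mul_nonneg_of_nonpos_of_nonpos _ hp
      have : h α ≤ h (reflx β α) := by
        rw [hrf]
        have : 0 ≤ 2 * (-⟪α, β⟫) / ⟪β, β⟫ * h β := by
          have : 0 ≤ -⟪α, β⟫ := by linarith
          positivity
        have h4 : 2 * (-⟪α, β⟫) / ⟪β, β⟫ * h β = - (2 * ⟪α, β⟫ / ⟪β, β⟫ * h β) := by ring
        linarith
      have := hmono _ _ this
      linarith
  · refine ⟨β, hβR, ?_⟩
    have hbb := rpos hβR
    rw [reflx_self hbb, map_neg, Left.sign_neg, sign_pos hb]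
    simp only [SignType.coe_neg, SignType.coe_one]
    have : 1 / (2 * ⟪β, β⟫) * (1 / 2 * (1:ℝ) - 1 / 2 * -1) * ⟪β, β⟫ = 1 / 2 := by
      field_simp
      norm_num
    rw [this]
    norm_num

/-- The critical equation paired with `β`. -/
lemma critical {c : ℝ} {t : V → ℝ} (ht : ∀ α ∈ D.R0, t α ∈ Set.Ioo (-1 : ℝ) 1) {μ ξ : V}
    (hmin : ∀ ζ : V, D.morse c t μ ξ ≤ D.morse c t μ ζ) (β : V) :
    c * ⟪ξ, β⟫ + ∑ α ∈ D.pos, 2 / ⟪α, α⟫ * vcl (t α) ⟪ξ, α⟫ * ⟪α, β⟫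
      = 2 * Real.pi * ⟪D.rhoVee + μ, β⟫ := by
  let φ : ℝ → ℝ := fun s => D.morse c t μ (ξ + s • β)
  have hloc : IsLocalMin φ 0 := by
    apply Filter.Eventually.of_forall
    intro s
    simpa [φ] using hmin (ξ + s • β)
  have hlin : ∀ α : V, HasDerivAt (fun s : ℝ => ⟪ξ + s • β, α⟫) ⟪β, α⟫ 0 := by
    intro α
    have h1 : (fun s : ℝ => ⟪ξ + s • β, α⟫) = fun s => ⟪ξ, α⟫ + s * ⟪β, α⟫ := by
      funext s
      simp [inner_add_left, inner_smul_left]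
    rw [h1]
    simpa using ((hasDerivAt_id (0:ℝ)).mul_const ⟪β, α⟫).const_add ⟪ξ, α⟫
  have hquad : HasDerivAt (fun s : ℝ => ⟪ξ + s • β, ξ + s • β⟫) (2 * ⟪ξ, β⟫) 0 := by
    have h1 : (fun s : ℝ => ⟪ξ + s • β, ξ + s • β⟫)
        = fun s => ⟪ξ, ξ⟫ + (s * (2 * ⟪ξ, β⟫) + s ^ 2 * ⟪β, β⟫) := by
      funext s
      simp only [inner_add_left, inner_smul_left, inner_add_right, inner_smul_right,
        conj_trivial, real_inner_comm ξ β]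
      ring
    rw [h1]
    have h2 := ((hasDerivAt_id (0:ℝ)).mul_const (2 * ⟪ξ, β⟫)).add
      (((hasDerivAt_id (0:ℝ)).pow 2).mul_const ⟪β, β⟫)
    have h3 := h2.const_add ⟪ξ, ξ⟫
    exact HasDerivAt.congr_deriv h3 (by simp)
  have hint : ∀ α ∈ D.pos, HasDerivAt
      (fun s : ℝ => (2 / ⟪α, α⟫) * ∫ x in (0:ℝ)..(⟪ξ + s • β, α⟫), mvfun (t α) x)
      (2 / ⟪α, α⟫ * (vcl (t α) ⟪ξ, α⟫ * ⟪β, α⟫)) 0 := by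
    intro α hα
    have htα := ht α (D.pos_subset hα)
    rw [mvfun_eq htα]
    apply HasDerivAt.const_mul
    have hF : HasDerivAt (fun u : ℝ => ∫ x in (0:ℝ)..u, vcl (t α) x) (vcl (t α) ⟪ξ, α⟫)
        ((fun s : ℝ => ⟪ξ + s • β, α⟫) 0) := by
      simp only [zero_smul, add_zero]
      exact intervalIntegral.integral_hasDerivAt_right
        ((vcl_continuous htα).intervalIntegrable _ _)
        ((vcl_continuous htα).stronglyMeasurableAtFilter _ _)
        (vcl_continuous htα).continuousAt
    exact HasDerivAt.comp (0:ℝ) hF (hlin α)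
  have hsum := HasDerivAt.fun_sum hint
  have hμ : HasDerivAt (fun s : ℝ => ⟪D.rhoVee + μ, ξ + s • β⟫) ⟪D.rhoVee + μ, β⟫ 0 := by
    have h := hlin (D.rhoVee + μ)
    simp only [real_inner_comm (D.rhoVee + μ)] at h
    exact h
  have hφ := ((hquad.const_mul (c / 2)).fun_sub (hμ.const_mul (2 * Real.pi))).fun_add hsum
  have h0 := hloc.hasDerivAt_eq_zero hφ
  have h4 : ∑ α ∈ D.pos, 2 / ⟪α, α⟫ * vcl (t α) ⟪ξ, α⟫ * ⟪α, β⟫ =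
      ∑ α ∈ D.pos, 2 / ⟪α, α⟫ * (vcl (t α) ⟪ξ, α⟫ * ⟪β, α⟫) := by
    apply Finset.sum_congr rfl
    intro α _
    rw [real_inner_comm α β]
    ring
  rw [h4]
  linarith

lemma gap {c : ℝ} {t : V → ℝ} (ht : ∀ α ∈ D.R0, t α ∈ Set.Ioo (-1 : ℝ) 1)
    (htinv : ∀ α ∈ D.R0, ∀ β ∈ D.R0, (∃ w ∈ D.W0, w α = β) → t α = t β) {μ ξ : V}
    (hmin : ∀ ζ : V, D.morse c t μ ξ ≤ D.morse c t μ ζ) {β : V} (hβ : β ∈ D.R0) :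
    ∃ K : ℝ, D.kappaPM t 1 ≤ K ∧ K ≤ D.kappaPM t (-1) ∧
      (c + K) * ⟪ξ, β⟫ = 2 * Real.pi * ⟪D.rhoVee + μ, β⟫ := by
  have hcr := D.critical ht hmin β
  rw [D.symmetrize hβ (fun α => vcl (t α) ⟪ξ, α⟫) (by
    intro α hα
    simp only [D.t_neg htinv hα, inner_neg_right, vcl_neg])] at hcr
  have hq : ∀ α : V, ∃ q : ℝ, α ∈ D.R0 →
      ((1 - t α ^ 2) / (1 + 1 * |t α|) ^ 2 ≤ q ∧ q ≤ (1 - t α ^ 2) / (1 + (-1) * |t α|) ^ 2 ∧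
      vcl (t α) ⟪ξ, α⟫ - vcl (t α) ⟪ξ, reflx β α⟫ = q * (⟪ξ, α⟫ - ⟪ξ, reflx β α⟫)) := by
    intro α
    by_cases hα : α ∈ D.R0
    · obtain ⟨q, h⟩ := vcl_slope (ht α hα) ⟪ξ, α⟫ ⟪ξ, reflx β α⟫
      exact ⟨q, fun _ => h⟩
    · exact ⟨0, fun h => absurd h hα⟩
  choose q hq using hq
  have hbb := rpos hβ
  refine ⟨(∑ α ∈ D.R0, q α * ⟪α, β⟫ ^ 2 / ⟪α, α⟫) / ⟪β, β⟫, ?_, ?_, ?_⟩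
  · rw [le_div_iff₀ hbb, ← D.kappa_eq htinv 1 hβ]
    apply Finset.sum_le_sum
    intro α hα
    have := rpos hα
    have := (hq α hα).1
    gcongr
  · rw [div_le_iff₀ hbb, ← D.kappa_eq htinv (-1) hβ]
    apply Finset.sum_le_sum
    intro α hα
    have := rpos hα
    have := (hq α hα).2.1
    gcongr
  · rw [← hcr, add_mul]
    congr 1
    rw [Finset.sum_div, Finset.sum_mul]
    apply Finset.sum_congr rfl
    intro α hα
    have ha := (rpos hα).ne'
    have hb := hbb.ne'
    rw [D.t_reflx htinv hα hβ, (hq α hα).2.2, real_inner_comm (reflx β α) ξ, inner_reflx,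
      real_inner_comm α ξ, real_inner_comm β ξ]
    field_simp
    ring

lemma kappa_nonneg {t : V → ℝ} (ht : ∀ α ∈ D.R0, t α ∈ Set.Ioo (-1 : ℝ) 1) (s : ℝ) :
    0 ≤ D.kappaPM t s := by
  apply mul_nonneg (by positivity)
  apply Finset.sum_nonneg
  intro α hα
  obtain ⟨h1, h2⟩ := ht α (D.pos_subset hα)
  apply div_nonneg _ (sq_nonneg _)
  nlinarith

/-- Upper bound for the pairing with all positive roots. -/
lemma upper {c : ℝ} (hc : 0 < c) {t : V → ℝ} (ht : ∀ α ∈ D.R0, t α ∈ Set.Ioo (-1 : ℝ) 1)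
    (htinv : ∀ α ∈ D.R0, ∀ β ∈ D.R0, (∃ w ∈ D.W0, w α = β) → t α = t β) {μ ξ : V}
    (hμdom : ∀ α ∈ D.pos, 0 ≤ ⟪μ, α⟫ ∧ ⟪μ, α⟫ ≤ c)
    (hmin : ∀ ζ : V, D.morse c t μ ξ ≤ D.morse c t μ ζ)
    (hpos : ∀ α ∈ D.pos, 0 < ⟪ξ, α⟫) : ∀ α ∈ D.pos, ⟪ξ, α⟫ < 2 * Real.pi := by
  obtain ⟨β, hβ, hmax⟩ := Finset.exists_max_image D.pos (fun α => ⟪ξ, α⟫) ⟨_, D.hshort_mem⟩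
  suffices h : ⟪ξ, β⟫ < 2 * Real.pi from fun α hα => (hmax α hα).trans_lt h
  by_contra! hX
  have hpi := Real.pi_pos
  have hβR := D.pos_subset hβ
  have hbb := rpos hβR
  have hne : ∀ α ∈ D.R0, ⟪ξ, α⟫ ≠ 0 := by
    intro α hα
    rcases D.pos_or_neg α hα with h1 | h1
    · exact (hpos _ h1).ne'
    · have := hpos _ h1
      rw [inner_neg_right] at this
      linarith
  have hab : ∀ α ∈ D.R0, -⟪ξ, β⟫ ≤ ⟪ξ, α⟫ ∧ ⟪ξ, α⟫ ≤ ⟪ξ, β⟫ := by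
    intro α hα
    have h3 := hpos β hβ
    rcases D.pos_or_neg α hα with h1 | h1
    · have h2 := hmax _ h1
      have := hpos _ h1
      exact ⟨by linarith, h2⟩
    · have h2 := hmax _ h1
      have := hpos _ h1
      simp only [inner_neg_right] at this h2
      exact ⟨by linarith, by linarith⟩
  have hcr := D.critical ht hmin β
  let F : V → ℝ := fun α => vcl (t α) ⟪ξ, α⟫ - Real.pi * SignType.sign ⟪ξ, α⟫
  have hFneg : ∀ α ∈ D.R0, F (-α) = - F α := by
    intro α hα
    simp only [F, D.t_neg htinv hα, inner_neg_right, vcl_neg, Left.sign_neg, SignType.coe_neg]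
    ring
  have hS := D.symmetrize hβR F hFneg
  have hS2 : ∑ α ∈ D.pos, 2 / ⟪α, α⟫ * F α * ⟪α, β⟫ =
      ∑ α ∈ D.pos, 2 / ⟪α, α⟫ * vcl (t α) ⟪ξ, α⟫ * ⟪α, β⟫ - 2 * Real.pi * ⟪D.rhoVee, β⟫ := by
    rw [D.rho_inner, Finset.mul_sum, ← Finset.sum_sub_distrib]
    apply Finset.sum_congr rfl
    intro α hα
    simp only [F, sign_pos (hpos α hα), SignType.coe_one]
    ring
  rw [hS2] at hS
  have hterm : ∀ α ∈ D.R0, 0 < ⟪α, β⟫ → 0 ≤ F α - F (reflx β α) := by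
    intro α hα hp
    obtain ⟨k, hk⟩ := D.crystallographic β hβR α hα
    have hkpos : (0:ℝ) < k := by
      rw [← hk, inner_coroot]
      positivity
    have hk1 : (1:ℝ) ≤ k := by
      have : (0:ℤ) < k := by exact_mod_cast hkpos
      exact_mod_cast this
    have hy : ⟪ξ, reflx β α⟫ = ⟪ξ, α⟫ - k * ⟪ξ, β⟫ := by
      rw [reflx, hk, inner_sub_right, inner_smul_right]
    have hXpos := hpos β hβ
    have hkX : ⟪ξ, β⟫ ≤ k * ⟪ξ, β⟫ := by nlinarith
    have hne2 := hne _ (D.reflx_mem hα hβR)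
    have hle : ⟪ξ, reflx β α⟫ < 0 := by
      apply lt_of_le_of_ne _ hne2
      rw [hy]
      linarith [(hab α hα).2]
    simp only [F, D.t_reflx htinv hα hβR, sign_neg hle]
    rcases lt_or_gt_of_ne (hne α hα) with hx | hx
    · rw [sign_neg hx]
      have := vcl_mono (ht α hα) (show ⟪ξ, reflx β α⟫ ≤ ⟪ξ, α⟫ by linarith)
      linarith
    · rw [sign_pos hx]
      have := vcl_mono (ht α hα) (show ⟪ξ, reflx β α⟫ ≤ ⟪ξ, α⟫ - 2 * Real.pi by linarith)
      rw [vcl_add] at this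
      simp only [SignType.coe_neg, SignType.coe_one]
      linarith
  have hSpos : 0 < ∑ α ∈ D.R0, 1 / (2 * ⟪α, α⟫) * (F α - F (reflx β α)) * ⟪α, β⟫ := by
    apply Finset.sum_pos'
    · intro α hα
      have ha := rpos hα
      rw [mul_assoc]
      apply mul_nonneg (by positivity)
      rcases lt_trichotomy 0 ⟪α, β⟫ with hp | hp | hp
      · exact mul_nonneg (hterm α hα hp) hp.le
      · rw [← hp, mul_zero]
      · apply mul_nonneg_of_nonpos_of_nonpos _ hp.le
        have h1 := hterm (-α) (D.neg_mem hα) (by rw [inner_neg_left]; linarith)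
        have h2 : reflx β (-α) = - reflx β α := by
          simp only [reflx, inner_neg_left, neg_smul]
          abel
        rw [h2, hFneg _ hα, hFneg _ (D.reflx_mem hα hβR)] at h1
        linarith
    · refine ⟨β, hβR, ?_⟩
      rw [reflx_self hbb, hFneg β hβR]
      have h1 : 0 < F β := by
        simp only [F, sign_pos (hpos β hβ), SignType.coe_one]
        have h2 := vcl_mono (ht β hβR) (show 0 ≤ ⟪ξ, β⟫ - 2 * Real.pi by linarith)
        rw [vcl_add] at h2
        have h3 : vcl (t β) 0 = 0 := by simp [vcl]
        linarith
      have h4 : 0 < F β - -F β := by linarith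
      positivity
  rw [← hS] at hSpos
  rw [inner_add_left] at hcr
  have h5 := (hμdom β hβ).2
  nlinarith

end RootSystemData

open RootSystemData in
/-- for `μ ∈ P_c^{∨,+}`, the global minimum `ξ_μ` of `𝒱_μ` lies in the
open alcove `2πA∨` and satisfies the moment-gap inequalities
`2π⟨ρ∨+μ,α⟩/(c+κ₋) ≤ ⟨ξ_μ,α⟩ ≤ 2π⟨ρ∨+μ,α⟩/(c+κ₊)` for every positive root `α`. -/
theorem statement13 {V : Type*} [NormedAddCommGroup V] [InnerProductSpace ℝ V]
    (D : RootSystemData V) (c : ℝ) (hc : 0 < c)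
    (t : V → ℝ) (ht : ∀ α ∈ D.R0, t α ∈ Set.Ioo (-1 : ℝ) 1)
    (htinv : ∀ α ∈ D.R0, ∀ β ∈ D.R0, (∃ w ∈ D.W0, w α = β) → t α = t β)
    (μ : V) (hμ : μ ∈ D.coweightLattice)
    (hμdom : ∀ α ∈ D.pos, 0 ≤ ⟪μ, α⟫ ∧ ⟪μ, α⟫ ≤ c)
    (ξμ : V) (hmin : ∀ ζ : V, D.morse c t μ ξμ ≤ D.morse c t μ ζ)
    (huniq : ∀ ξ' : V, (∀ ζ : V, D.morse c t μ ξ' ≤ D.morse c t μ ζ) → ξ' = ξμ) :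
    (∀ α ∈ D.pos, 0 < ⟪ξμ, α⟫ ∧ ⟪ξμ, α⟫ < 2 * Real.pi) ∧
    (∀ α ∈ D.pos,
      2 * Real.pi * ⟪D.rhoVee + μ, α⟫ / (c + D.kappaPM t (-1)) ≤ ⟪ξμ, α⟫ ∧
      ⟪ξμ, α⟫ ≤ 2 * Real.pi * ⟪D.rhoVee + μ, α⟫ / (c + D.kappaPM t 1)) := by
  have hgap : ∀ α ∈ D.pos, ∃ K : ℝ, D.kappaPM t 1 ≤ K ∧ K ≤ D.kappaPM t (-1) ∧
      (c + K) * ⟪ξμ, α⟫ = 2 * Real.pi * ⟪D.rhoVee + μ, α⟫ := fun α hα =>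
    D.gap ht htinv hmin (D.pos_subset hα)
  have hk1 := D.kappa_nonneg ht 1
  have hpi := Real.pi_pos
  have hpos : ∀ α ∈ D.pos, 0 < ⟪ξμ, α⟫ := by
    intro α hα
    obtain ⟨K, h1, h2, h3⟩ := hgap α hα
    have h4 : 0 < ⟪D.rhoVee + μ, α⟫ := by
      rw [inner_add_left]
      linarith [D.rho_pos hα, (hμdom α hα).1]
    have h5 : 0 < (c + K) * ⟪ξμ, α⟫ := by rw [h3]; positivity
    exact pos_of_mul_pos_right h5 (by linarith)
  refine ⟨fun α hα => ⟨hpos α hα, D.upper hc ht htinv hμdom hmin hpos α hα⟩, ?_⟩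
  intro α hα
  obtain ⟨K, h1, h2, h3⟩ := hgap α hα
  have hp := hpos α hα
  rw [← h3, div_le_iff₀ (by linarith), le_div_iff₀ (by linarith)]
  constructor <;> nlinarith
end
end

section
/- Assume the multiplicity parameters are real with 0 < τ_a² < 1 for all a ∈ R. Define the weight δ_λ := τ_{w_λ}² for λ ∈ P, the Hilbert space ℓ²(P,δ) := {f : P → ℂ : ∑_{λ∈P} |f(λ)|² δ_λ < ∞} with inner product ⟨f,g⟩_δ := ∑_{λ∈P} f(λ) \overline{g(λ)} δ_λ. Then for every j ∈ {0,…,n} and every u ∈ Ω the operators T̂_j and u (acting by (uf)(λ) := f(u⁻¹λ)) map ℓ²(P,δ) boundedly into itself, and ⟨T̂_j f, g⟩_δ = ⟨f, T̂_j g⟩_δ and ⟨u f, g⟩_δ = ⟨f, u⁻¹ g⟩_δ for all f, g ∈ ℓ²(P,δ); i.e. the difference-reflection representation of the extended affine Hecke algebra is unitary on ℓ²(P,δ) with respect to the ∗-structure T_w∗ = T_{w⁻¹}. -/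
open scoped RealInnerProductSpace BigOperators Classical

noncomputable section

open RootSystemData in
/-- The orthogonality weight `δ_λ = τ_{w_λ}²`. -/
def deltaW {V : Type*} [NormedAddCommGroup V] [InnerProductSpace ℝ V]
    (D : RootSystemData V) (c : ℝ) (τ : V × ℤ → ℝ) (wmin : V → Equiv.Perm V)
    (lam : V) : ℝ :=
  D.tauw c τ (wmin lam) ^ 2

open RootSystemData in
/-- Membership in the Hilbert space `ℓ²(P,δ)`. -/
def MemL2 {V : Type*} [NormedAddCommGroup V] [InnerProductSpace ℝ V]
    (D : RootSystemData V) (c : ℝ) (τ : V × ℤ → ℝ) (wmin : V → Equiv.Perm V)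
    (f : V → ℂ) : Prop :=
  Summable fun p : D.weightLattice => ‖f p.1‖ ^ 2 * deltaW D c τ wmin p.1

open RootSystemData in
/-- The inner product `⟨f,g⟩_δ = ∑_{λ∈P} f(λ) conj(g(λ)) δ_λ` of `ℓ²(P,δ)`. -/
def innerDelta {V : Type*} [NormedAddCommGroup V] [InnerProductSpace ℝ V]
    (D : RootSystemData V) (c : ℝ) (τ : V × ℤ → ℝ) (wmin : V → Equiv.Perm V)
    (f g : V → ℂ) : ℂ :=
  ∑' p : D.weightLattice, f p.1 * (starRingEnd ℂ) (g p.1) * ((deltaW D c τ wmin p.1 : ℝ) : ℂ)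

open RootSystemData in
/-- The squared norm `∑_{λ∈P} |f(λ)|² δ_λ` of `ℓ²(P,δ)`. -/
def normSqDelta {V : Type*} [NormedAddCommGroup V] [InnerProductSpace ℝ V]
    (D : RootSystemData V) (c : ℝ) (τ : V × ℤ → ℝ) (wmin : V → Equiv.Perm V)
    (f : V → ℂ) : ℝ :=
  ∑' p : D.weightLattice, ‖f p.1‖ ^ 2 * deltaW D c τ wmin p.1

namespace S16

variable {V : Type*} [NormedAddCommGroup V] [InnerProductSpace ℝ V]

lemma inner_coroot (x α : V) : ⟪x, coroot α⟫ = 2 / ⟪α, α⟫ * ⟪x, α⟫ := by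
  simp [coroot, real_inner_smul_right]

lemma self_pos {α : V} (h : α ≠ 0) : 0 < ⟪α, α⟫ := by
  rw [real_inner_self_eq_norm_sq]; positivity

lemma coroot_self {α : V} (h : α ≠ 0) : ⟪α, coroot α⟫ = 2 := by
  have := self_pos h
  rw [inner_coroot]; field_simp

lemma coroot_neg (α : V) : coroot (-α) = -coroot α := by
  simp [coroot]

lemma coroot_refl {α β : V} (hα : α ≠ 0) :
    coroot (β - ⟪β, coroot α⟫ • α) = coroot β - ⟪α, coroot β⟫ • coroot α := by
  have h1 := self_pos hα
  have hn : ⟪β - ⟪β, coroot α⟫ • α, β - ⟪β, coroot α⟫ • α⟫ = ⟪β, β⟫ := by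
    simp only [inner_sub_left, inner_sub_right, real_inner_smul_left, real_inner_smul_right,
      inner_coroot, real_inner_comm β α]
    field_simp
    ring
  rw [coroot, hn, inner_coroot α β, inner_coroot β α, coroot, coroot, smul_sub, smul_smul,
    smul_smul, real_inner_comm β α]
  congr 2
  ring

lemma coroot_inj {α β : V} (hα : α ≠ 0) (hβ : β ≠ 0) (h : coroot α = coroot β) : α = β := by
  have h1 := self_pos hα
  have h2 := self_pos hβ
  have key : ∀ γ : V, γ ≠ 0 → γ = (2 / ⟪coroot γ, coroot γ⟫) • coroot γ := by
    intro γ hγ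
    have h3 := self_pos hγ
    have : ⟪coroot γ, coroot γ⟫ = 4 / ⟪γ, γ⟫ := by
      rw [inner_coroot, coroot, real_inner_smul_left]; field_simp; norm_num
    rw [this]
    simp only [coroot, smul_smul]
    have : 2 / (4 / ⟪γ, γ⟫) * (2 / ⟪γ, γ⟫) = (1:ℝ) := by field_simp; norm_num
    rw [this, one_smul]
  rw [key α hα, key β hβ, h]

lemma aval_inj {c : ℝ} (hc : c ≠ 0) {a b : V × ℤ} (ha : a.1 ≠ 0) (hb : b.1 ≠ 0)
    (h : ∀ x, aval c a x = aval c b x) : a = b := by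
  have h0 := h 0
  simp only [aval, inner_zero_left, zero_add] at h0
  have h2 : a.2 = b.2 := by
    have := mul_right_cancel₀ hc h0
    exact_mod_cast this
  have h1 : a.1 = b.1 := by
    apply coroot_inj ha hb
    apply ext_inner_left ℝ
    intro x
    have := h x
    simp only [aval, h2] at this
    linarith
  exact Prod.ext h1 h2

/-- negation of affine roots -/
def nega (a : V × ℤ) : V × ℤ := (-a.1, -a.2)

lemma aval_nega (c : ℝ) (a : V × ℤ) (x : V) : aval c (nega a) x = - aval c a x := by
  simp [aval, nega, coroot_neg]; ring

lemma nega_nega (a : V × ℤ) : nega (nega a) = a := by simp [nega]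

variable (D : RootSystemData V)

lemma neg_mem {α : V} (h : α ∈ D.R0) : -α ∈ D.R0 := by
  have := D.reflect_mem α h α h
  rw [coroot_self (D.ne_zero α h)] at this
  convert this using 1
  module

lemma nega_root {a : V × ℤ} (h : D.IsAffRoot a) : D.IsAffRoot (nega a) := neg_mem D h

lemma pos_root {a : V × ℤ} (h : D.IsAffPos a) : D.IsAffRoot a := h.1

lemma isNeg_iff (a : V × ℤ) : D.IsAffNeg a ↔ D.IsAffPos (nega a) := Iff.rfl

lemma pos_or_neg {a : V × ℤ} (h : D.IsAffRoot a) : D.IsAffPos a ∨ D.IsAffNeg a := by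
  have h' := neg_mem D h
  rcases lt_trichotomy a.2 0 with h0 | h0 | h0
  · right; exact ⟨h', Or.inl (by show 1 ≤ -a.2; omega)⟩
  · rcases D.pos_or_neg _ h with h1 | h1
    · left; exact ⟨h, Or.inr ⟨h0, h1⟩⟩
    · right; exact ⟨h', Or.inr ⟨by show -a.2 = 0; omega, h1⟩⟩
  · left; exact ⟨h, Or.inl (by omega)⟩

lemma not_both {a : V × ℤ} (h : D.IsAffPos a) (h' : D.IsAffNeg a) : False := by
  obtain ⟨h1, h2⟩ := h
  obtain ⟨h3, h4⟩ := h'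
  simp only at h4
  rcases h2 with h2 | ⟨h2, h5⟩ <;> rcases h4 with h4 | ⟨h4, h6⟩
  · omega
  · omega
  · omega
  · exact D.pos_not_both _ h5 h6

/-- reflection of affine roots -/
def rr (a b : V × ℤ) : V × ℤ :=
  (b.1 - ⟪b.1, coroot a.1⟫ • a.1, b.2 - a.2 * ⌊⟪a.1, coroot b.1⟫⌋)

lemma floor_eq {α β : V} (hα : α ∈ D.R0) (hβ : β ∈ D.R0) :
    ((⌊⟪α, coroot β⟫⌋ : ℤ) : ℝ) = ⟪α, coroot β⟫ := by
  obtain ⟨k, hk⟩ := D.crystallographic β hβ α hα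
  rw [hk, Int.floor_intCast]

lemma rr_root {a b : V × ℤ} (ha : D.IsAffRoot a) (hb : D.IsAffRoot b) : D.IsAffRoot (rr a b) :=
  D.reflect_mem _ ha _ hb

lemma aval_sub_smul (c : ℝ) (b : V × ℤ) (x y : V) (t : ℝ) :
    aval c b (x - t • y) = aval c b x - t * ⟪y, coroot b.1⟫ := by
  simp only [aval, inner_sub_left, real_inner_smul_left]; ring

lemma aval_rr (c : ℝ) {a b : V × ℤ} (ha : D.IsAffRoot a) (hb : D.IsAffRoot b) (x : V) :
    aval c (rr a b) x = aval c b x - ⟪a.1, coroot b.1⟫ * aval c a x := by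
  simp only [aval, rr]
  rw [coroot_refl (D.ne_zero _ ha), inner_sub_right, real_inner_smul_right]
  push_cast
  rw [floor_eq D ha hb]
  ring

lemma aval_sAff (c : ℝ) {a b : V × ℤ} (ha : D.IsAffRoot a) (hb : D.IsAffRoot b) (x : V) :
    aval c b (sAff c a x) = aval c (rr a b) x := by
  rw [aval_rr D c ha hb, sAff, aval_sub_smul]; ring

lemma aval_sAff_self (c : ℝ) {a : V × ℤ} (ha : D.IsAffRoot a) (x : V) :
    aval c a (sAff c a x) = - aval c a x := by
  rw [sAff, aval_sub_smul, coroot_self (D.ne_zero _ ha)]; ring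

lemma sAff_invol (c : ℝ) {a : V × ℤ} (ha : D.IsAffRoot a) (x : V) :
    sAff c a (sAff c a x) = x := by
  rw [sAff, aval_sAff_self D c ha, sAff]; module

/-- reflection as a permutation -/
def sPerm (c : ℝ) {a : V × ℤ} (ha : D.IsAffRoot a) : Equiv.Perm V :=
  ⟨sAff c a, sAff c a, sAff_invol D c ha, sAff_invol D c ha⟩

lemma sPerm_apply (c : ℝ) {a : V × ℤ} (ha : D.IsAffRoot a) (x : V) :
    sPerm D c ha x = sAff c a x := rfl

lemma sPerm_inv_apply (c : ℝ) {a : V × ℤ} (ha : D.IsAffRoot a) (x : V) :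
    (sPerm D c ha)⁻¹ x = sAff c a x := rfl

lemma sPerm_WR (c : ℝ) {a : V × ℤ} (ha : D.IsAffRoot a) : sPerm D c ha ∈ D.WR c :=
  Subgroup.subset_closure ⟨a, ha, fun _ => rfl⟩

lemma WR_le (c : ℝ) : D.WR c ≤ D.Wext c :=
  Subgroup.closure_mono Set.subset_union_left

lemma maps_sPerm (c : ℝ) {a b : V × ℤ} (ha : D.IsAffRoot a) (hb : D.IsAffRoot b) :
    mapsRoot c (sPerm D c ha) b (rr a b) := fun x => by
  rw [sPerm_inv_apply, aval_sAff D c ha hb]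

lemma maps_mul {c : ℝ} {w w' : Equiv.Perm V} {a b d : V × ℤ} (h : mapsRoot c w a b)
    (h' : mapsRoot c w' b d) : mapsRoot c (w' * w) a d := fun x => by
  rw [mul_inv_rev, Equiv.Perm.mul_apply, h, h']

lemma maps_inv {c : ℝ} {w : Equiv.Perm V} {a b : V × ℤ} (h : mapsRoot c w a b) :
    mapsRoot c w⁻¹ b a := fun x => by
  rw [← h, inv_inv]; simp

lemma maps_nega {c : ℝ} {w : Equiv.Perm V} {a b : V × ℤ} (h : mapsRoot c w a b) :
    mapsRoot c w (nega a) (nega b) := fun x => by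
  rw [aval_nega, aval_nega, h]

lemma maps_apply {c : ℝ} {w : Equiv.Perm V} {a b : V × ℤ} (h : mapsRoot c w a b) (x : V) :
    aval c b (w x) = aval c a x := by
  rw [← h]; simp

lemma maps_unique {c : ℝ} (hc : c ≠ 0) {w : Equiv.Perm V} {a b b' : V × ℤ}
    (hb : D.IsAffRoot b) (hb' : D.IsAffRoot b')
    (h : mapsRoot c w a b) (h' : mapsRoot c w a b') : b = b' :=
  aval_inj hc (D.ne_zero _ hb) (D.ne_zero _ hb') fun x => by rw [← h, ← h']

lemma maps_unique' {c : ℝ} (hc : c ≠ 0) {w : Equiv.Perm V} {a a' b : V × ℤ}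
    (ha : D.IsAffRoot a) (ha' : D.IsAffRoot a')
    (h : mapsRoot c w a b) (h' : mapsRoot c w a' b) : a = a' :=
  maps_unique D hc ha ha' (maps_inv h) (maps_inv h')

lemma wt_add {x y : V} (hx : x ∈ D.weightLattice) (hy : y ∈ D.weightLattice) :
    x + y ∈ D.weightLattice := fun α hα => by
  obtain ⟨k, hk⟩ := hx α hα
  obtain ⟨l, hl⟩ := hy α hα
  exact ⟨k + l, by rw [inner_add_left, hk, hl]; push_cast; ring⟩

lemma wt_smul {x : V} (hx : x ∈ D.weightLattice) (m : ℤ) :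
    (m : ℝ) • x ∈ D.weightLattice := fun α hα => by
  obtain ⟨k, hk⟩ := hx α hα
  exact ⟨m * k, by rw [real_inner_smul_left, hk]; push_cast; ring⟩

lemma wt_sAff (cz : ℤ) {a : V × ℤ} (ha : D.IsAffRoot a) {x : V} (hx : x ∈ D.weightLattice) :
    sAff (cz : ℝ) a x ∈ D.weightLattice := by
  obtain ⟨k, hk⟩ := hx a.1 ha
  have : sAff (cz : ℝ) a x = x + ((-(k + a.2 * cz) : ℤ) : ℝ) • a.1 := by
    rw [sAff, aval, hk]; push_cast; module
  rw [this]
  exact wt_add D hx (wt_smul D (fun β hβ => D.crystallographic β hβ _ ha) _)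

lemma ext_good (cz : ℤ) {w : Equiv.Perm V} (hw : w ∈ D.Wext (cz : ℝ)) :
    (∀ a, D.IsAffRoot a → ∃ b, D.IsAffRoot b ∧ mapsRoot (cz : ℝ) w a b) ∧
    (∀ x ∈ D.weightLattice, w x ∈ D.weightLattice) ∧
    (∀ a, D.IsAffRoot a → ∃ b, D.IsAffRoot b ∧ mapsRoot (cz : ℝ) w⁻¹ a b) ∧
    (∀ x ∈ D.weightLattice, w⁻¹ x ∈ D.weightLattice) := by
  induction hw using Subgroup.closure_induction with
  | mem e he =>
    rcases he with ⟨a, ha, he⟩ | ⟨l, hl, he⟩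
    · have : e = sPerm D (cz : ℝ) ha := Equiv.ext he
      subst this
      have h1 : (sPerm D (cz : ℝ) ha)⁻¹ = sPerm D (cz : ℝ) ha := Equiv.ext fun _ => rfl
      rw [h1]
      have A : ∀ b, D.IsAffRoot b → ∃ b', D.IsAffRoot b' ∧
          mapsRoot (cz : ℝ) (sPerm D (cz : ℝ) ha) b b' :=
        fun b hb => ⟨rr a b, rr_root D ha hb, maps_sPerm D _ ha hb⟩
      have B : ∀ x ∈ D.weightLattice, sPerm D (cz : ℝ) ha x ∈ D.weightLattice :=
        fun x hx => wt_sAff D cz ha hx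
      exact ⟨A, B, A, B⟩
    · have hei : ∀ x, e⁻¹ x = x + (cz : ℝ) • (-l) := by
        intro x
        rw [Equiv.Perm.inv_eq_iff_eq, he]; module
      have hl' : -l ∈ D.weightLattice := by
        have := wt_smul D hl (-1); simpa using this
      have T : ∀ e : Equiv.Perm V, ∀ l ∈ D.weightLattice, (∀ x, e⁻¹ x = x + (cz : ℝ) • l) →
          ∀ a, D.IsAffRoot a → ∃ b, D.IsAffRoot b ∧ mapsRoot (cz : ℝ) e a b := by
        intro e l hl he a ha
        obtain ⟨k, hk⟩ := hl _ ha
        refine ⟨(a.1, a.2 + k), ha, fun x => ?_⟩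
        simp only [he, aval, inner_add_left, real_inner_smul_left, hk]
        push_cast; ring
      refine ⟨T e _ hl' hei, fun x hx => ?_, T e⁻¹ _ hl (by simpa using he), fun x hx => ?_⟩
      · rw [he]; exact wt_add D hx (wt_smul D hl _)
      · rw [hei]; exact wt_add D hx (wt_smul D hl' _)
  | one => exact ⟨fun a ha => ⟨a, ha, fun x => rfl⟩, fun x hx => hx,
      fun a ha => ⟨a, ha, fun x => rfl⟩, fun x hx => hx⟩
  | mul x y _ _ h h' =>
    refine ⟨fun a ha => ?_, fun z hz => h.2.1 _ (h'.2.1 _ hz), fun a ha => ?_, fun z hz => ?_⟩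
    · obtain ⟨b, hb, h1⟩ := h'.1 a ha
      obtain ⟨d, hd, h2⟩ := h.1 b hb
      exact ⟨d, hd, maps_mul h1 h2⟩
    · obtain ⟨b, hb, h1⟩ := h.2.2.1 a ha
      obtain ⟨d, hd, h2⟩ := h'.2.2.1 b hb
      rw [mul_inv_rev]
      exact ⟨d, hd, maps_mul h1 h2⟩
    · rw [mul_inv_rev]; exact h'.2.2.2 _ (h.2.2.2 _ hz)
  | inv x _ h => exact ⟨h.2.2.1, h.2.2.2, by rw [inv_inv]; exact h.1, by rw [inv_inv]; exact h.2.1⟩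

lemma span_simple : (⊤ : Submodule ℝ V) ≤ Submodule.span ℝ (Set.range D.simpleRoot) := by
  rw [← D.span_top, Submodule.span_le]
  have key : ∀ α ∈ D.pos, α ∈ Submodule.span ℝ (Set.range D.simpleRoot) := by
    intro α hα
    obtain ⟨k, hk⟩ := D.pos_natCombo α hα
    rw [hk]
    exact Submodule.sum_mem _ fun j _ => Submodule.smul_mem _ _
      (Submodule.subset_span ⟨j, rfl⟩)
  intro α hα
  rcases D.pos_or_neg α hα with h | h
  · exact key _ h
  · simpa using Submodule.neg_mem _ (key _ h)

lemma exists_basis : ∃ b : Module.Basis (Fin D.n) ℝ V, ∀ j, b j = D.simpleRoot j := by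
  refine ⟨basisOfTopLeSpanOfCardEqFinrank D.simpleRoot (span_simple D)
    (by rw [D.rank_eq]; simp), fun j => by simp⟩

lemma repr_combo (b : Module.Basis (Fin D.n) ℝ V) (hb : ∀ j, b j = D.simpleRoot j)
    (k : Fin D.n → ℕ) (i : Fin D.n) : b.repr (∑ j, (k j : ℝ) • D.simpleRoot j) i = k i := by
  simp only [← hb]
  rw [Module.Basis.repr_sum_self]

lemma exists_ht : ∃ h : V →ₗ[ℝ] ℝ, ∀ α ∈ D.pos, 0 < h α := by
  obtain ⟨b, hb⟩ := exists_basis D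
  refine ⟨b.constr ℝ (fun _ => (1:ℝ)), fun α hα => ?_⟩
  obtain ⟨k, hk⟩ := D.pos_natCombo α hα
  have h1 : b.constr ℝ (fun _ => (1:ℝ)) α = ∑ j, (k j : ℝ) := by
    rw [hk, map_sum]
    refine Finset.sum_congr rfl fun j _ => ?_
    rw [map_smul, ← hb, Module.Basis.constr_basis]; simp
  rw [h1]
  refine lt_of_le_of_ne (Finset.sum_nonneg fun j _ => by positivity) fun h0 => ?_
  have h2 := (Finset.sum_eq_zero_iff_of_nonneg (fun j _ => by positivity)).1 h0.symm
  apply D.ne_zero α (D.pos_subset hα)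
  rw [hk]
  exact Finset.sum_eq_zero fun j hj => by rw [h2 j hj, zero_smul]

/-- affine height functional -/
lemma exists_H : ∃ (h : V →ₗ[ℝ] ℝ) (M : ℝ), ∀ a, D.IsAffPos a →
    0 < h (coroot a.1) + a.2 * M := by
  obtain ⟨h, hh⟩ := exists_ht D
  refine ⟨h, (∑ α ∈ D.R0, |h (coroot α)|) + 1, fun a ⟨ha, ha'⟩ => ?_⟩
  have h1 : |h (coroot a.1)| ≤ ∑ α ∈ D.R0, |h (coroot α)| :=
    Finset.single_le_sum (f := fun α => |h (coroot α)|) (fun _ _ => abs_nonneg _) ha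
  have h2 := neg_abs_le (h (coroot a.1))
  rcases ha' with h3 | ⟨h3, h4⟩
  · have : (1:ℝ) ≤ a.2 := by exact_mod_cast h3
    have h0 := abs_nonneg (h (coroot a.1))
    nlinarith
  · rw [h3]
    have := self_pos (D.ne_zero _ ha)
    have := hh _ h4
    simp only [coroot, map_smul, smul_eq_mul]
    have h5 : 0 < 2 / ⟪a.1, a.1⟫ := by positivity
    have := mul_pos h5 this
    simpa using this

/-- if functions satisfy `d = b + k a`, `k ≥ 0` with `a, b` positive, then `d` is positive. -/
lemma pos_of_combo {c : ℝ} (hc : c ≠ 0) {a b d : V × ℤ} (ha : D.IsAffPos a) (hb : D.IsAffPos b)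
    (hd : D.IsAffRoot d) {k : ℝ} (hk : 0 ≤ k)
    (h : ∀ x, aval c d x = aval c b x + k * aval c a x) : D.IsAffPos d := by
  obtain ⟨H, M, hH⟩ := exists_H D
  have h0 := h 0
  simp only [aval, inner_zero_left, zero_add] at h0
  have h2 : (d.2 : ℝ) = b.2 + k * a.2 := by
    apply mul_right_cancel₀ hc; linarith
  have h1 : coroot d.1 = coroot b.1 + k • coroot a.1 := by
    apply ext_inner_left ℝ
    intro x
    have := h x
    simp only [aval, h2] at this
    rw [inner_add_right, real_inner_smul_right]
    linarith
  rcases pos_or_neg D hd with h3 | h3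
  · exact h3
  exfalso
  have e1 := hH _ ha
  have e2 := hH _ hb
  have e3 := hH _ h3
  simp only [coroot_neg, map_neg, h1, map_add, map_smul, smul_eq_mul] at e3
  push_cast at e3
  rw [h2] at e3
  nlinarith [mul_nonneg hk e1.le]


lemma RW_finite {c : ℝ} (hc : 1 < c) (w : Equiv.Perm V) : (D.RW c w).Finite := by
  set B : ℝ := ∑ α ∈ D.R0, |⟪w⁻¹ 0, coroot α⟫| with hB
  refine Set.Finite.subset ((D.R0 ×ˢ Finset.Icc (0:ℤ) ⌊B⌋).finite_toSet) ?_
  rintro a ⟨⟨ha, ha'⟩, b, ⟨_, hb⟩, hm⟩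
  have h0 : 0 ≤ a.2 := by rcases ha' with h | h <;> omega
  have h1 : b.2 ≤ 0 := by simp only at hb; rcases hb with h | h <;> omega
  have h2 := hm 0
  simp only [aval, inner_zero_left, zero_add] at h2
  have h3 : |⟪w⁻¹ 0, coroot a.1⟫| ≤ B :=
    Finset.single_le_sum (f := fun α => |⟪w⁻¹ 0, coroot α⟫|) (fun _ _ => abs_nonneg _) ha
  have h4 := neg_abs_le ⟪w⁻¹ 0, coroot a.1⟫
  have h0' : (0:ℝ) ≤ a.2 := by exact_mod_cast h0
  have h1' : (b.2:ℝ) ≤ 0 := by exact_mod_cast h1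
  have h5 : (a.2 : ℝ) ≤ B := by nlinarith
  simp only [Finset.coe_product, Finset.coe_Icc, Set.mem_prod, Finset.mem_coe, Set.mem_Icc]
  exact ⟨ha, h0, Int.le_floor.2 h5⟩

lemma rr_rr {a b : V × ℤ} (ha : D.IsAffRoot a) (hb : D.IsAffRoot b) : rr a (rr a b) = b := by
  have h1 := rr_root D ha hb
  refine aval_inj (c := 1) one_ne_zero (D.ne_zero _ (rr_root D ha h1)) (D.ne_zero _ hb)
    fun x => ?_
  rw [← aval_sAff D _ ha h1, ← aval_sAff D _ ha hb, sAff_invol D _ ha]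

lemma rr_self {a : V × ℤ} (ha : D.IsAffRoot a) : rr a a = nega a := by
  refine aval_inj (c := 1) one_ne_zero (D.ne_zero _ (rr_root D ha ha))
    (D.ne_zero _ (nega_root D ha)) fun x => ?_
  rw [← aval_sAff D _ ha ha, aval_sAff_self D _ ha, aval_nega]

lemma len_lt (cz : ℤ) (hc : 1 < cz) {w : Equiv.Perm V} (hw : w ∈ D.Wext (cz : ℝ))
    {a : V × ℤ} (haw : a ∈ D.RW (cz : ℝ) w) (ha : D.IsAffRoot a) :
    D.len (cz : ℝ) (w * sPerm D (cz : ℝ) ha) < D.len (cz : ℝ) w := by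
  have hcr : (1 : ℝ) < cz := by exact_mod_cast hc
  have hc0 : (cz : ℝ) ≠ 0 := by positivity
  have hfin := RW_finite D hcr w
  refine lt_of_le_of_lt ?_ (Set.ncard_diff_singleton_lt_of_mem haw hfin)
  obtain ⟨hap, e, he, hwe⟩ := haw
  refine Set.ncard_le_ncard_of_injOn (fun b => if D.IsAffPos (rr a b) then rr a b else b) ?_ ?_
    (hfin.subset Set.diff_subset)
  · rintro b ⟨hb, d, hd, hm⟩
    have hbr := hb.1
    have hdr : D.IsAffRoot d := by
      have := nega_root D hd.1; simpa [nega] using this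
    have her : D.IsAffRoot e := by
      have := nega_root D he.1; simpa [nega] using this
    have hrr := rr_root D ha hbr
    have hm' : mapsRoot (cz : ℝ) w (rr a b) d := by
      have h1 := maps_sPerm D (cz : ℝ) ha hrr
      rw [rr_rr D ha hbr] at h1
      have h2 := maps_mul h1 hm
      have h3 : w * sPerm D (cz : ℝ) ha * sPerm D (cz : ℝ) ha = w := by
        ext x; simp [sPerm_apply, sAff_invol D _ ha]
      rwa [h3] at h2
    by_cases hp : D.IsAffPos (rr a b)
    · simp only [hp, if_true]
      refine ⟨⟨hp, d, hd, hm'⟩, fun h => ?_⟩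
      have h : rr a b = a := h
      have h1 := rr_rr D ha hbr
      rw [h, rr_self D ha] at h1
      rw [← h1] at hb
      exact not_both D hap hb
    · simp only [hp, if_false]
      refine ⟨⟨hb, ?_⟩, fun h => ?_⟩
      · obtain ⟨d', hd', hm2⟩ := (ext_good D cz hw).1 b hbr
        refine ⟨d', ?_, hm2⟩
        have hk : 0 ≤ ⟪a.1, coroot b.1⟫ := by
          by_contra hk
          push Not at hk
          exact hp (pos_of_combo D hc0 hap hb hrr (k := -⟪a.1, coroot b.1⟫) (by linarith)
            fun x => by rw [aval_rr D _ ha hbr]; ring)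
        rw [isNeg_iff]
        refine pos_of_combo D hc0 (a := nega e) (b := nega d) he hd (nega_root D hd') hk
          fun x => ?_
        rw [aval_nega, aval_nega, aval_nega, ← hm2, ← hm', ← hwe, aval_rr D _ ha hbr]
        ring
      · have h : b = a := h
        subst h
        rw [rr_self D ha] at hm'
        have := maps_unique D hc0 hdr (nega_root D her) hm' (maps_nega hwe)
        rw [this] at hd
        exact not_both D he hd
  · rintro b ⟨hb, _⟩ b' ⟨hb', _⟩ h
    have hbr := hb.1
    have hbr' := hb'.1
    by_cases hp : D.IsAffPos (rr a b) <;> by_cases hp' : D.IsAffPos (rr a b') <;>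
      simp only [hp, hp', if_true, if_false] at h
    · rw [← rr_rr D ha hbr, h, rr_rr D ha hbr']
    · rw [← h, rr_rr D ha hbr] at hp'; exact absurd hb hp'
    · rw [h, rr_rr D ha hbr'] at hp; exact absurd hb' hp
    · exact h

/-- positive affine roots that are negative at `x` -/
def NN (c : ℝ) (x : V) : Set (V × ℤ) := {a | D.IsAffPos a ∧ aval c a x < 0}

lemma RW_eq (cz : ℤ) (hc : 1 < cz) {wmin : V → Equiv.Perm V} (hwmin : D.IsWmin (cz : ℝ) wmin)
    (x : V) : D.RW (cz : ℝ) (wmin x) = NN D (cz : ℝ) x := by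
  obtain ⟨h1, h2, h3⟩ := hwmin x
  have hW := WR_le D _ h1
  ext a
  constructor
  · intro h
    refine ⟨h.1, ?_⟩
    by_contra hn
    push Not at hn
    obtain ⟨hap, b, hb, hm⟩ := id h
    have h4 := h2 _ hb
    have h4' : 0 ≤ aval (cz : ℝ) (nega b) (wmin x x) := h4
    rw [aval_nega, maps_apply hm] at h4'
    have h5 : aval (cz : ℝ) a x = 0 := by linarith
    have hlt := len_lt D cz hc hW h hap.1
    have h6 := h3 (wmin x * sPerm D (cz : ℝ) hap.1)
      (Subgroup.mul_mem _ h1 (sPerm_WR D _ hap.1)) (by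
        show wmin x (sAff (cz : ℝ) a x) ∈ D.alcove (cz : ℝ)
        rw [sAff, h5, zero_smul, sub_zero]; exact h2)
    rcases h6 with h6 | h6
    · omega
    · rw [h6] at hlt; omega
  · rintro ⟨hap, hn⟩
    obtain ⟨b, hb, hm⟩ := (ext_good D cz hW).1 a hap.1
    refine ⟨hap, b, ?_, hm⟩
    rcases pos_or_neg D hb with h | h
    · have := h2 _ h
      rw [maps_apply hm] at this
      linarith
    · exact h

lemma finprod_congr_maps {cz : ℤ} (hc : 1 < cz) {τ : V × ℤ → ℝ}
    (hτinv : ∀ w ∈ D.Wext (cz : ℝ), ∀ a b : V × ℤ, D.IsAffRoot a → D.IsAffRoot b →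
      mapsRoot (cz : ℝ) w a b → τ a = τ b)
    {w : Equiv.Perm V} (hw : w ∈ D.Wext (cz : ℝ)) {S T : Set (V × ℤ)}
    (hS : ∀ a ∈ S, D.IsAffRoot a) (hT : ∀ a ∈ T, D.IsAffRoot a)
    (hST : ∀ a ∈ S, ∀ b, D.IsAffRoot b → mapsRoot (cz : ℝ) w a b → b ∈ T)
    (hTS : ∀ b ∈ T, ∀ a, D.IsAffRoot a → mapsRoot (cz : ℝ) w a b → a ∈ S) :
    ∏ᶠ a ∈ S, τ a = ∏ᶠ a ∈ T, τ a := by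
  have hc0 : (cz : ℝ) ≠ 0 := by
    have : cz ≠ 0 := by omega
    exact_mod_cast this
  have g := ext_good D cz hw
  choose! φ hφ hφm using g.1
  refine finprod_mem_eq_of_bijOn φ ⟨fun a ha => hST a ha _ (hφ a (hS a ha)) (hφm a (hS a ha)),
    ?_, ?_⟩ fun a ha => hτinv w hw _ _ (hS a ha) (hφ a (hS a ha)) (hφm a (hS a ha))
  · intro a ha b hb h
    have h1 := hφm a (hS a ha)
    rw [h] at h1
    exact maps_unique' D hc0 (hS a ha) (hS b hb) h1 (hφm b (hS b hb))
  · intro b hb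
    obtain ⟨a, ha, hm⟩ := g.2.2.1 b (hT b hb)
    have hm' := maps_inv hm
    rw [inv_inv] at hm'
    exact ⟨a, hTS b hb a ha hm', maps_unique D hc0 (hφ a ha) (hT b hb) (hφm a ha) hm'⟩

lemma delta_u {cz : ℤ} (hc : 1 < cz) {τ : V × ℤ → ℝ}
    (hτinv : ∀ w ∈ D.Wext (cz : ℝ), ∀ a b : V × ℤ, D.IsAffRoot a → D.IsAffRoot b →
      mapsRoot (cz : ℝ) w a b → τ a = τ b)
    {wmin : V → Equiv.Perm V} (hwmin : D.IsWmin (cz : ℝ) wmin)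
    {u : Equiv.Perm V} (hu : u ∈ D.Wext (cz : ℝ)) (hl : D.len (cz : ℝ) u = 0) (x : V) :
    deltaW D (cz : ℝ) τ wmin (u x) = deltaW D (cz : ℝ) τ wmin x := by
  have hcr : (1 : ℝ) < cz := by exact_mod_cast hc
  have hE : D.RW (cz : ℝ) u = ∅ := (Set.ncard_eq_zero (RW_finite D hcr u)).1 hl
  have hpos : ∀ a b, D.IsAffPos a → D.IsAffRoot b → mapsRoot (cz : ℝ) u a b → D.IsAffPos b := by
    intro a b ha hb hm
    rcases pos_or_neg D hb with h | h
    · exact h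
    · have : a ∈ D.RW (cz : ℝ) u := ⟨ha, b, h, hm⟩
      rw [hE] at this; exact this.elim
  have hpos' : ∀ a b, D.IsAffPos b → D.IsAffRoot a → mapsRoot (cz : ℝ) u a b → D.IsAffPos a := by
    intro a b hb ha hm
    rcases pos_or_neg D ha with h | h
    · exact h
    · exact (not_both D hb (hpos _ _ h (nega_root D hb.1) (maps_nega hm))).elim
  unfold deltaW RootSystemData.tauw
  rw [RW_eq D cz hc hwmin, RW_eq D cz hc hwmin]
  congr 1
  symm
  refine finprod_congr_maps D hc hτinv hu (fun a ha => ha.1.1) (fun a ha => ha.1.1) ?_ ?_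
  · rintro a ⟨ha, ha'⟩ b hb hm
    exact ⟨hpos a b ha hb hm, by rwa [maps_apply hm]⟩
  · rintro b ⟨hb, hb'⟩ a ha hm
    exact ⟨hpos' a b hb ha hm, by rwa [maps_apply hm] at hb'⟩

lemma simple_pos (j : Fin (D.n + 1)) : D.IsAffPos (D.aSimple j) := by
  refine Fin.cases ?_ (fun i => ?_) j
  · exact ⟨neg_mem D (D.pos_subset D.hshort_mem), Or.inl (le_refl _)⟩
  · exact ⟨D.pos_subset (D.simpleRoot_mem i), Or.inr ⟨rfl, D.simpleRoot_mem i⟩⟩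

lemma hshort_dom {γ : V} (hγ : γ ∈ D.pos) : 0 ≤ ⟪D.hshort, coroot γ⟫ := by
  by_contra hn
  push Not at hn
  have hr := D.pos_subset hγ
  have hs := D.reflect_mem γ hr _ (D.pos_subset D.hshort_mem)
  have hnorm : ‖D.hshort - ⟪D.hshort, coroot γ⟫ • γ‖ = ‖D.hshort‖ := by
    have h1 := self_pos (D.ne_zero _ hr)
    rw [← sq_eq_sq₀ (norm_nonneg _) (norm_nonneg _), ← real_inner_self_eq_norm_sq,
      ← real_inner_self_eq_norm_sq]
    simp only [inner_sub_left, inner_sub_right, real_inner_smul_left, real_inner_smul_right,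
      inner_coroot, real_inner_comm D.hshort γ]
    field_simp
    ring
  obtain ⟨k, hk⟩ := D.hshort_highest _ hs hnorm
  obtain ⟨h, hh⟩ := exists_ht D
  have h1 : h (D.hshort - (D.hshort - ⟪D.hshort, coroot γ⟫ • γ)) < 0 := by
    rw [sub_sub_cancel, map_smul, smul_eq_mul]
    exact mul_neg_of_neg_of_pos hn (hh _ hγ)
  rw [hk, map_sum] at h1
  refine absurd h1 (not_lt.2 (Finset.sum_nonneg fun j _ => ?_))
  rw [map_smul, smul_eq_mul]
  have := hh _ (D.simpleRoot_mem j)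
  positivity

lemma hshort_lt_two {β : V} (hβ : β ∈ D.R0) (hne : β ≠ D.hshort) :
    ⟪D.hshort, coroot β⟫ < 2 := by
  have h1 := self_pos (D.ne_zero _ hβ)
  have h2 := self_pos (sub_ne_zero.2 hne)
  have h3 := D.hshort_short β hβ
  have h4 : ⟪D.hshort, D.hshort⟫ ≤ ⟪β, β⟫ := by
    rw [real_inner_self_eq_norm_sq, real_inner_self_eq_norm_sq]
    gcongr
  simp only [inner_sub_left, inner_sub_right, real_inner_comm D.hshort β] at h2
  rw [inner_coroot, div_mul_eq_mul_div, div_lt_iff₀ h1]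
  rw [real_inner_comm β D.hshort] at *
  linarith

lemma simple_perm (j : Fin (D.n + 1)) {b : V × ℤ} (hb : D.IsAffPos b) (hne : b ≠ D.aSimple j) :
    D.IsAffPos (rr (D.aSimple j) b) := by
  have hr := rr_root D (simple_pos D j).1 hb.1
  refine ⟨hr, ?_⟩
  revert hne hr
  refine Fin.cases ?_ (fun i => ?_) j
  · intro hne hr
    change b ≠ (-D.hshort, 1) at hne
    change b.1 - ⟪b.1, coroot (-D.hshort)⟫ • (-D.hshort) ∈ D.R0 at hr
    change 1 ≤ b.2 - 1 * ⌊⟪-D.hshort, coroot b.1⟫⌋ ∨ (b.2 - 1 * ⌊⟪-D.hshort, coroot b.1⟫⌋ = 0 ∧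
      b.1 - ⟪b.1, coroot (-D.hshort)⟫ • (-D.hshort) ∈ D.pos)
    have hθ := D.pos_subset D.hshort_mem
    have hθ0 := D.ne_zero _ hθ
    obtain ⟨k, hk⟩ := D.crystallographic _ hb.1 _ hθ
    have hkf : ⌊⟪-D.hshort, coroot b.1⟫⌋ = -k := by
      rw [inner_neg_left, hk, ← Int.cast_neg, Int.floor_intCast]
    have hγ : b.1 - ⟪b.1, coroot (-D.hshort)⟫ • (-D.hshort)
        = b.1 - ⟪b.1, coroot D.hshort⟫ • D.hshort := by
      rw [coroot_neg, inner_neg_right]; module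
    rw [hγ] at hr ⊢
    rw [hkf]
    set γ := b.1 - ⟪b.1, coroot D.hshort⟫ • D.hshort with hγdef
    have hγk : ⟪D.hshort, coroot γ⟫ = -(k:ℝ) := by
      rw [hγdef, coroot_refl hθ0, inner_sub_right, real_inner_smul_right, coroot_self hθ0, hk]
      ring
    have hγpos : k < 0 → γ ∈ D.pos := by
      intro hk0
      rcases D.pos_or_neg _ hr with h | h
      · exact h
      · have := hshort_dom D h
        rw [coroot_neg, inner_neg_right, hγk] at this
        have : (0:ℝ) ≤ k := by linarith
        have : 0 ≤ k := by exact_mod_cast this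
        omega
    by_cases h2 : b.1 = -D.hshort
    · have hk2 : k = -2 := by
        rw [h2, coroot_neg, inner_neg_right, coroot_self hθ0] at hk
        have : (k:ℝ) = ((-2:ℤ):ℝ) := by rw [← hk]; norm_num
        exact_mod_cast this
      have hb2 : 1 ≤ b.2 := by
        rcases hb.2 with h | ⟨_, h⟩
        · exact h
        · rw [h2] at h; exact absurd h (D.pos_not_both _ D.hshort_mem)
      have hb3 : b.2 ≠ 1 := fun h => hne (Prod.ext h2 h)
      have := hγpos (by omega)
      by_cases h : b.2 = 2
      · right; exact ⟨by omega, this⟩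
      · left; omega
    · have hk2 : -2 < k := by
        have := hshort_lt_two D (neg_mem D hb.1) (fun h => h2 (by rw [← h, neg_neg]))
        rw [coroot_neg, inner_neg_right, hk] at this
        have : (-2:ℝ) < k := by linarith
        exact_mod_cast this
      rcases hb.2 with h | ⟨h, hp⟩
      · by_cases h3 : k = -1 ∧ b.2 = 1
        · right; exact ⟨by omega, hγpos (by omega)⟩
        · left; omega
      · have hk0 : 0 ≤ k := by
          have := hshort_dom D hp
          rw [hk] at this
          exact_mod_cast this
        by_cases h3 : k = 0
        · right
          refine ⟨by omega, ?_⟩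
          have : ⟪b.1, coroot D.hshort⟫ = 0 := by
            have h1 := self_pos (D.ne_zero _ hb.1)
            rw [h3, inner_coroot] at hk
            have : ⟪D.hshort, b.1⟫ = 0 := by
              rcases mul_eq_zero.1 (hk.trans Int.cast_zero) with h | h
              · have : 0 < 2 / ⟪b.1, b.1⟫ := by positivity
                linarith
              · exact h
            rw [inner_coroot, real_inner_comm D.hshort b.1, this, mul_zero]
          rw [hγdef, this, zero_smul, sub_zero]; exact hp
        · left; omega
  · intro hne hr
    change b ≠ (D.simpleRoot i, 0) at hne
    change b.1 - ⟪b.1, coroot (D.simpleRoot i)⟫ • D.simpleRoot i ∈ D.R0 at hr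
    change 1 ≤ b.2 - 0 * ⌊⟪D.simpleRoot i, coroot b.1⟫⌋ ∨
      (b.2 - 0 * ⌊⟪D.simpleRoot i, coroot b.1⟫⌋ = 0 ∧
      b.1 - ⟪b.1, coroot (D.simpleRoot i)⟫ • D.simpleRoot i ∈ D.pos)
    rcases hb.2 with h | ⟨h, hp⟩
    · left; omega
    right
    refine ⟨by omega, ?_⟩
    rcases D.pos_or_neg _ hr with h1 | h1
    · exact h1
    exfalso
    obtain ⟨B, hB⟩ := exists_basis D
    obtain ⟨k, hk⟩ := D.pos_natCombo _ hp
    obtain ⟨l, hl⟩ := D.pos_natCombo _ h1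
    have hk0 : ∀ m, m ≠ i → k m = 0 := by
      intro m hm
      have e1 : B.repr b.1 m = k m := by
        conv_lhs => rw [hk]
        exact repr_combo D B hB k m
      have e2 : B.repr (-(b.1 - ⟪b.1, coroot (D.simpleRoot i)⟫ • D.simpleRoot i)) m = l m := by
        rw [hl]; exact repr_combo D B hB l m
      rw [← hB i] at e2
      simp only [map_neg, map_sub, map_smul, Finsupp.coe_neg, Finsupp.coe_sub, Finsupp.coe_smul,
        Pi.neg_apply, Pi.sub_apply, Pi.smul_apply, e1, Module.Basis.repr_self,
        Finsupp.single_eq_of_ne hm, smul_zero, sub_zero] at e2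
      have e3 : (0:ℝ) ≤ k m := by positivity
      have e4 : (0:ℝ) ≤ l m := by positivity
      have : (k m : ℝ) = 0 := by linarith
      exact_mod_cast this
    have hbk : b.1 = (k i : ℝ) • D.simpleRoot i := by
      conv_lhs => rw [hk]
      refine Finset.sum_eq_single i (fun m _ hm => by rw [hk0 m hm]; simp) (by simp)
    have hs := D.simpleRoot_mem i
    have hb1 := hb.1
    rw [hbk] at hb1
    rcases D.reduced _ (D.pos_subset hs) _ hb1 with h2 | h2
    · rw [h2, one_smul] at hbk
      exact hne (Prod.ext hbk h)
    · have : (0:ℝ) ≤ k i := by positivity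
      linarith

lemma delta_s {cz : ℤ} (hc : 1 < cz) {τ : V × ℤ → ℝ}
    (hτinv : ∀ w ∈ D.Wext (cz : ℝ), ∀ a b : V × ℤ, D.IsAffRoot a → D.IsAffRoot b →
      mapsRoot (cz : ℝ) w a b → τ a = τ b)
    {wmin : V → Equiv.Perm V} (hwmin : D.IsWmin (cz : ℝ) wmin)
    (j : Fin (D.n + 1)) (x : V) (hx : 0 < aval (cz : ℝ) (D.aSimple j) x) :
    deltaW D (cz : ℝ) τ wmin (sAff (cz : ℝ) (D.aSimple j) x)
      = τ (D.aSimple j) ^ 2 * deltaW D (cz : ℝ) τ wmin x := by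
  have hcr : (1 : ℝ) < cz := by exact_mod_cast hc
  have hc0 : (cz : ℝ) ≠ 0 := by positivity
  set a := D.aSimple j with ha
  have hap := simple_pos D j
  have har : D.IsAffRoot a := hap.1
  set y := sAff (cz : ℝ) a x with hy
  have hyx : ∀ b, D.IsAffRoot b → aval (cz : ℝ) b y = aval (cz : ℝ) (rr a b) x :=
    fun b hb => aval_sAff D _ har hb x
  have hay : aval (cz : ℝ) a y < 0 := by
    rw [hy, aval_sAff_self D _ har]; linarith
  have hmem : a ∈ NN D (cz : ℝ) y := ⟨hap, hay⟩
  have hfin : (NN D (cz : ℝ) y).Finite := by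
    rw [← RW_eq D cz hc hwmin]; exact RW_finite D hcr _
  unfold deltaW RootSystemData.tauw
  rw [RW_eq D cz hc hwmin, RW_eq D cz hc hwmin, ← mul_pow]
  congr 1
  have e1 : NN D (cz : ℝ) y = insert a (NN D (cz : ℝ) y \ {a}) := by
    rw [Set.insert_diff_singleton, Set.insert_eq_of_mem hmem]
  rw [e1, finprod_mem_insert _ (by simp) (hfin.subset Set.diff_subset)]
  congr 1
  symm
  refine finprod_congr_maps D hc hτinv (WR_le D _ (sPerm_WR D _ har)) (fun b hb => hb.1.1)
    (fun b hb => hb.1.1.1) ?_ ?_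
  · rintro b ⟨hb, hb'⟩ d hd hm
    have : d = rr a b := maps_unique D hc0 hd (rr_root D har hb.1) hm (maps_sPerm D _ har hb.1)
    have hba : b ≠ a := by rintro rfl; linarith
    subst this
    refine ⟨⟨simple_perm D j hb hba, ?_⟩, fun h => ?_⟩
    · rw [hyx _ hd, rr_rr D har hb.1]; exact hb'
    · have h : rr a b = a := h
      have h1 := rr_rr D har hb.1
      rw [h, rr_self D har] at h1
      rw [← h1] at hb
      exact not_both D hap hb
  · rintro d ⟨⟨hd, hd'⟩, hda⟩ b hb hm
    have : d = rr a b := maps_unique D hc0 hd.1 (rr_root D har hb) hm (maps_sPerm D _ har hb)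
    have hb2 : b = rr a d := by rw [this, rr_rr D har hb]
    subst hb2
    exact ⟨simple_perm D j hd hda, by rw [← hyx _ hd.1]; exact hd'⟩

lemma delta_pos {cz : ℤ} {τ : V × ℤ → ℝ}
    (hτsq : ∀ a : V × ℤ, D.IsAffRoot a → 0 < τ a ^ 2 ∧ τ a ^ 2 < 1)
    (wmin : V → Equiv.Perm V) (x : V) : 0 < deltaW D (cz : ℝ) τ wmin x := by
  have : D.tauw (cz : ℝ) τ (wmin x) ≠ 0 := by
    unfold RootSystemData.tauw
    refine finprod_mem_induction (fun t : ℝ => t ≠ 0) one_ne_zero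
      (fun _ _ h h' => mul_ne_zero h h') fun a ha => ?_
    have := (hτsq a ha.1.1).1
    rintro h0
    rw [h0] at this; norm_num at this
  unfold deltaW
  positivity

section Abstract

variable {P : Type*} (δ : P → ℝ) (σ : P ≃ P) (s : P → ℝ) (t : ℝ)

/-- abstract form of the difference-reflection operator -/
def TT (F : P → ℂ) (p : P) : ℂ :=
  if 0 < s p then (t : ℂ) * F (σ p)
  else if s p = 0 then (t : ℂ) * F p
  else ((t : ℂ))⁻¹ * F (σ p) + ((t : ℂ) - ((t : ℂ))⁻¹) * F p

lemma TT_bound (hδ : ∀ p, 0 < δ p) (ht : t ≠ 0) (ht1 : t ^ 2 < 1)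
    (hneg : ∀ p, s (σ p) = - s p) (hinv : ∀ p, σ (σ p) = p)
    (hpos : ∀ p, 0 < s p → δ (σ p) = t ^ 2 * δ p) (F : P → ℂ) (p : P) :
    ‖TT σ s t F p‖ ^ 2 * δ p ≤ (2 + 2 * (t - t⁻¹) ^ 2) *
      (‖F (σ p)‖ ^ 2 * δ (σ p) + ‖F p‖ ^ 2 * δ p) := by
  have h1 : 0 ≤ ‖F (σ p)‖ ^ 2 * δ (σ p) := by have := hδ (σ p); positivity
  have h2 : 0 ≤ ‖F p‖ ^ 2 * δ p := by have := hδ p; positivity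
  have h3 : 0 ≤ (t - t⁻¹) ^ 2 := sq_nonneg _
  unfold TT
  split_ifs with hs hs0
  · have e : ‖(t : ℂ) * F (σ p)‖ ^ 2 * δ p = ‖F (σ p)‖ ^ 2 * δ (σ p) := by
      rw [hpos p hs, norm_mul, mul_pow, Complex.norm_real, Real.norm_eq_abs, sq_abs]; ring
    rw [e]
    nlinarith [mul_nonneg h3 h1, mul_nonneg h3 h2]
  · have e : ‖(t : ℂ) * F p‖ ^ 2 * δ p = t ^ 2 * (‖F p‖ ^ 2 * δ p) := by
      rw [norm_mul, mul_pow, Complex.norm_real, Real.norm_eq_abs, sq_abs]; ring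
    rw [e]
    nlinarith [mul_nonneg h3 h1, mul_nonneg h3 h2]
  · have hs' : 0 < s (σ p) := by
      rw [hneg]
      have := lt_of_le_of_ne (not_lt.1 hs) hs0
      linarith
    have e := hpos _ hs'
    rw [hinv] at e
    have e1 : ‖((t : ℂ))⁻¹ * F (σ p) + ((t : ℂ) - ((t : ℂ))⁻¹) * F p‖
        ≤ |t⁻¹| * ‖F (σ p)‖ + |t - t⁻¹| * ‖F p‖ := by
      refine (norm_add_le _ _).trans (le_of_eq ?_)
      rw [norm_mul, norm_mul, ← Complex.ofReal_inv, ← Complex.ofReal_sub, Complex.norm_real,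
        Complex.norm_real, Real.norm_eq_abs, Real.norm_eq_abs]
    have e2 : ‖((t : ℂ))⁻¹ * F (σ p) + ((t : ℂ) - ((t : ℂ))⁻¹) * F p‖ ^ 2
        ≤ 2 * (t⁻¹ ^ 2 * ‖F (σ p)‖ ^ 2) + 2 * ((t - t⁻¹) ^ 2 * ‖F p‖ ^ 2) := by
      refine (pow_le_pow_left₀ (norm_nonneg _) e1 2).trans ?_
      rw [← sq_abs t⁻¹, ← sq_abs (t - t⁻¹)]
      nlinarith [sq_nonneg (|t⁻¹| * ‖F (σ p)‖ - |t - t⁻¹| * ‖F p‖)]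
    have e3 := mul_le_mul_of_nonneg_right e2 (hδ p).le
    have e4 : (2 * (t⁻¹ ^ 2 * ‖F (σ p)‖ ^ 2) + 2 * ((t - t⁻¹) ^ 2 * ‖F p‖ ^ 2)) * δ p
        = 2 * (‖F (σ p)‖ ^ 2 * δ (σ p)) + 2 * (t - t⁻¹) ^ 2 * (‖F p‖ ^ 2 * δ p) := by
      rw [e]
      generalize (t - t⁻¹) ^ 2 = q
      field_simp
    rw [e4] at e3
    nlinarith [mul_nonneg h3 h1, mul_nonneg h3 h2]

lemma summable_inner (hδ : ∀ p, 0 < δ p) (F G : P → ℂ)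
    (hF : Summable fun p => ‖F p‖ ^ 2 * δ p) (hG : Summable fun p => ‖G p‖ ^ 2 * δ p) :
    Summable fun p => F p * (starRingEnd ℂ) (G p) * ((δ p : ℝ) : ℂ) := by
  refine Summable.of_norm_bounded (hF.add hG) fun p => ?_
  rw [norm_mul, norm_mul, Complex.norm_real, Real.norm_eq_abs, abs_of_pos (hδ p),
    RCLike.norm_conj, ← add_mul]
  refine mul_le_mul_of_nonneg_right ?_ (hδ p).le
  nlinarith [sq_nonneg (‖F p‖ - ‖G p‖), norm_nonneg (F p), norm_nonneg (G p)]

lemma TT_main (hδ : ∀ p, 0 < δ p) (ht : t ≠ 0) (ht1 : t ^ 2 < 1)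
    (hneg : ∀ p, s (σ p) = - s p) (hinv : ∀ p, σ (σ p) = p)
    (hpos : ∀ p, 0 < s p → δ (σ p) = t ^ 2 * δ p) (F : P → ℂ)
    (hF : Summable fun p => ‖F p‖ ^ 2 * δ p) :
    (Summable fun p => ‖TT σ s t F p‖ ^ 2 * δ p) ∧
    ∑' p, ‖TT σ s t F p‖ ^ 2 * δ p ≤ (2 * (2 + 2 * (t - t⁻¹) ^ 2)) * ∑' p, ‖F p‖ ^ 2 * δ p := by
  have hFσ : Summable fun p => ‖F (σ p)‖ ^ 2 * δ (σ p) :=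
    (σ.summable_iff (f := fun p => ‖F p‖ ^ 2 * δ p)).2 hF
  have hb := TT_bound δ σ s t hδ ht ht1 hneg hinv hpos F
  have hsum := (hFσ.add hF).mul_left (2 + 2 * (t - t⁻¹) ^ 2)
  have h1 : Summable fun p => ‖TT σ s t F p‖ ^ 2 * δ p :=
    Summable.of_nonneg_of_le (fun p => mul_nonneg (sq_nonneg _) (hδ p).le) hb hsum
  refine ⟨h1, (h1.tsum_le_tsum hb hsum).trans (le_of_eq ?_)⟩
  rw [tsum_mul_left, hFσ.tsum_add hF, σ.tsum_eq (fun p => ‖F p‖ ^ 2 * δ p)]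
  ring

lemma TT_symm (hδ : ∀ p, 0 < δ p) (ht : t ≠ 0) (ht1 : t ^ 2 < 1)
    (hneg : ∀ p, s (σ p) = - s p) (hinv : ∀ p, σ (σ p) = p)
    (hpos : ∀ p, 0 < s p → δ (σ p) = t ^ 2 * δ p) (F G : P → ℂ)
    (hF : Summable fun p => ‖F p‖ ^ 2 * δ p) (hG : Summable fun p => ‖G p‖ ^ 2 * δ p) :
    ∑' p, TT σ s t F p * (starRingEnd ℂ) (G p) * ((δ p : ℝ) : ℂ)
      = ∑' p, F p * (starRingEnd ℂ) (TT σ s t G p) * ((δ p : ℝ) : ℂ) := by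
  have h1 := summable_inner δ hδ _ _ (TT_main δ σ s t hδ ht ht1 hneg hinv hpos F hF).1 hG
  have h2 := summable_inner δ hδ _ _ hF (TT_main δ σ s t hδ ht ht1 hneg hinv hpos G hG).1
  have htc : (t : ℂ) ≠ 0 := by exact_mod_cast ht
  rw [← sub_eq_zero, ← h1.tsum_sub h2]
  set m : P → ℂ := fun p => TT σ s t F p * (starRingEnd ℂ) (G p) * ((δ p : ℝ) : ℂ) -
    F p * (starRingEnd ℂ) (TT σ s t G p) * ((δ p : ℝ) : ℂ) with hm
  have key : ∀ p, 0 < s p → m (σ p) = - m p := by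
    intro p hp
    have e1 : ¬ 0 < s (σ p) := by rw [hneg]; linarith
    have e2 : ¬ s (σ p) = 0 := by rw [hneg]; linarith
    simp only [hm, TT, hp, e1, e2, if_true, if_false, hinv, hpos p hp, map_add, map_mul, map_sub,
      map_inv₀, Complex.conj_ofReal]
    push_cast
    field_simp
    ring
  have hodd : ∀ p, m (σ p) = - m p := by
    intro p
    rcases lt_trichotomy (s p) 0 with h | h | h
    · have := key (σ p) (by rw [hneg]; linarith)
      rw [hinv] at this
      rw [this, neg_neg]
    · have e1 : s (σ p) = 0 := by rw [hneg, h, neg_zero]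
      simp only [hm, TT, h, e1, lt_irrefl, if_true, if_false, map_mul, Complex.conj_ofReal]
      ring
    · exact key p h
  have h3 : ∑' p, m p = - ∑' p, m p := by
    conv_lhs => rw [← σ.tsum_eq m]
    simp only [hodd]
    rw [tsum_neg]
  exact self_eq_neg.1 h3

end Abstract

end S16

open RootSystemData in
/-- for real multiplicity parameters with `0 < τ_a² < 1`, the
difference-reflection operators `T̂_j` and the `Ω`-action map `ℓ²(P,δ)` boundedly into
itself, with `⟨T̂_j f, g⟩_δ = ⟨f, T̂_j g⟩_δ` and `⟨uf, g⟩_δ = ⟨f, u⁻¹g⟩_δ`; i.e. the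
difference-reflection representation is unitary with respect to `T_w∗ = T_{w⁻¹}`. -/
theorem statement16 {V : Type*} [NormedAddCommGroup V] [InnerProductSpace ℝ V]
    (D : RootSystemData V) (cz : ℤ) (hc : 1 < cz)
    (τ : V × ℤ → ℝ) (hτsq : ∀ a : V × ℤ, D.IsAffRoot a → 0 < τ a ^ 2 ∧ τ a ^ 2 < 1)
    (hτinv : ∀ w ∈ D.Wext (cz : ℝ), ∀ a b : V × ℤ, D.IsAffRoot a → D.IsAffRoot b →
      mapsRoot (cz : ℝ) w a b → τ a = τ b)
    (wmin : V → Equiv.Perm V) (hwmin : D.IsWmin (cz : ℝ) wmin) :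
    -- the operators T̂_j are bounded and self-adjoint on ℓ²(P,δ)
    (∀ j : Fin (D.n + 1),
      (∀ f : V → ℂ, MemL2 D (cz : ℝ) τ wmin f →
        MemL2 D (cz : ℝ) τ wmin
          (hatT (cz : ℝ) (fun a => ((τ a : ℝ) : ℂ)) (D.aSimple j) f)) ∧
      (∃ C : ℝ, ∀ f : V → ℂ, MemL2 D (cz : ℝ) τ wmin f →
        normSqDelta D (cz : ℝ) τ wmin
            (hatT (cz : ℝ) (fun a => ((τ a : ℝ) : ℂ)) (D.aSimple j) f)
          ≤ C * normSqDelta D (cz : ℝ) τ wmin f) ∧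
      (∀ f g : V → ℂ, MemL2 D (cz : ℝ) τ wmin f → MemL2 D (cz : ℝ) τ wmin g →
        innerDelta D (cz : ℝ) τ wmin
            (hatT (cz : ℝ) (fun a => ((τ a : ℝ) : ℂ)) (D.aSimple j) f) g
          = innerDelta D (cz : ℝ) τ wmin f
              (hatT (cz : ℝ) (fun a => ((τ a : ℝ) : ℂ)) (D.aSimple j) g))) ∧
    -- the elements u ∈ Ω act boundedly, with adjoint u⁻¹
    (∀ u : Equiv.Perm V, u ∈ D.Wext (cz : ℝ) → D.len (cz : ℝ) u = 0 →
      (∀ f : V → ℂ, MemL2 D (cz : ℝ) τ wmin f →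
        MemL2 D (cz : ℝ) τ wmin fun x => f (u⁻¹ x)) ∧
      (∃ C : ℝ, ∀ f : V → ℂ, MemL2 D (cz : ℝ) τ wmin f →
        normSqDelta D (cz : ℝ) τ wmin (fun x => f (u⁻¹ x))
          ≤ C * normSqDelta D (cz : ℝ) τ wmin f) ∧
      (∀ f g : V → ℂ, MemL2 D (cz : ℝ) τ wmin f → MemL2 D (cz : ℝ) τ wmin g →
        innerDelta D (cz : ℝ) τ wmin (fun x => f (u⁻¹ x)) g
          = innerDelta D (cz : ℝ) τ wmin f fun x => g (u x))) := by
  have hδ : ∀ p : D.weightLattice, 0 < deltaW D (cz : ℝ) τ wmin p.1 :=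
    fun p => S16.delta_pos D hτsq wmin p.1
  constructor
  · intro j
    have har : D.IsAffRoot (D.aSimple j) := (S16.simple_pos D j).1
    have ht := hτsq _ har
    have ht0 : τ (D.aSimple j) ≠ 0 := by
      intro h0; rw [h0] at ht; norm_num at ht
    let σ : D.weightLattice ≃ D.weightLattice :=
      ⟨fun p => ⟨sAff (cz : ℝ) (D.aSimple j) p.1, S16.wt_sAff D cz har p.2⟩,
       fun p => ⟨sAff (cz : ℝ) (D.aSimple j) p.1, S16.wt_sAff D cz har p.2⟩,
       fun p => Subtype.ext (S16.sAff_invol D _ har p.1),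
       fun p => Subtype.ext (S16.sAff_invol D _ har p.1)⟩
    let s : D.weightLattice → ℝ := fun p => aval (cz : ℝ) (D.aSimple j) p.1
    have hneg : ∀ p, s (σ p) = - s p := fun p => S16.aval_sAff_self D _ har p.1
    have hinv : ∀ p, σ (σ p) = p := fun p => Subtype.ext (S16.sAff_invol D _ har p.1)
    have hpos : ∀ p, 0 < s p → deltaW D (cz : ℝ) τ wmin (σ p).1
        = τ (D.aSimple j) ^ 2 * deltaW D (cz : ℝ) τ wmin p.1 :=
      fun p hp => S16.delta_s D hc hτinv hwmin j p.1 hp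
    have main := fun (f : V → ℂ) (hf : MemL2 D (cz : ℝ) τ wmin f) =>
      S16.TT_main (fun p : D.weightLattice => deltaW D (cz : ℝ) τ wmin p.1) σ s
        (τ (D.aSimple j)) hδ ht0 ht.2 hneg hinv hpos (fun p => f p.1) hf
    refine ⟨fun f hf => (main f hf).1, ⟨_, fun f hf => (main f hf).2⟩, fun f g hf hg => ?_⟩
    exact S16.TT_symm (fun p : D.weightLattice => deltaW D (cz : ℝ) τ wmin p.1) σ s
        (τ (D.aSimple j)) hδ ht0 ht.2 hneg hinv hpos (fun p => f p.1) (fun p => g p.1) hf hg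
  · intro u hu hl
    have hg := S16.ext_good D cz hu
    let σ : D.weightLattice ≃ D.weightLattice :=
      ⟨fun p => ⟨u p.1, hg.2.1 _ p.2⟩, fun p => ⟨u⁻¹ p.1, hg.2.2.2 _ p.2⟩,
       fun p => Subtype.ext (by simp), fun p => Subtype.ext (by simp)⟩
    have hδu : ∀ p : D.weightLattice, deltaW D (cz : ℝ) τ wmin (σ p).1
        = deltaW D (cz : ℝ) τ wmin p.1 := fun p => S16.delta_u D hc hτinv hwmin hu hl p.1
    have hui : ∀ p : D.weightLattice, u⁻¹ (σ p).1 = p.1 := fun p => by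
      show u⁻¹ (u p.1) = p.1
      simp
    have hfun : ∀ f : V → ℂ, (fun p : D.weightLattice =>
        ‖f (u⁻¹ (σ p).1)‖ ^ 2 * deltaW D (cz : ℝ) τ wmin (σ p).1)
        = fun p : D.weightLattice => ‖f p.1‖ ^ 2 * deltaW D (cz : ℝ) τ wmin p.1 := by
      intro f; funext p; rw [hui, hδu]
    refine ⟨fun f hf => ?_, ⟨1, fun f hf => ?_⟩, fun f g hf hg => ?_⟩
    · refine (σ.summable_iff (f := fun p : D.weightLattice =>
        ‖f (u⁻¹ p.1)‖ ^ 2 * deltaW D (cz : ℝ) τ wmin p.1)).1 ?_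
      have := hfun f
      unfold MemL2 at hf
      rw [← this] at hf
      exact hf
    · rw [one_mul]
      unfold normSqDelta
      rw [← hfun f, ← σ.tsum_eq]
    · unfold innerDelta
      rw [← σ.tsum_eq]
      refine tsum_congr fun p => ?_
      simp only [hui, hδu]
      rfl
end
end
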